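/- arXiv:2302.04540 — 9 statements merged into one kernel-verified Lean document; each statement's English description precedes it below -/
import Mathlib

section
/- For d = 9, every compatible couple (Σ_{m,n,q}, (pos, neg)) with m ≥ 1, n ≥ 1, q ≥ 1, m + n + q = 10, whose Z_2×Z_2-orbit is not among the orbits of (Σ_{1,8,1},(0,3)), (Σ_{1,8,1},(0,5)), (Σ_{1,8,1},(0,7)), (Σ_{1,7,2},(0,5)), (Σ_{1,7,2},(0,7)), (Σ_{1,6,3},(0,5)), (Σ_{1,6,3},(0,7)), (Σ_{2,6,2},(0,5)), (Σ_{2,6,2},(0,7)), (Σ_{1,5,4},(0,7)), (Σ_{1,4,5},(0,7)), (Σ_{2,4,4},(0,7)), (Σ_{2,5,3},(0,7)), (Σ_{3,4,3},(0,7)), is realizable. -/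
/-!
Every non-exceptional couple is realized by an explicit polynomial in factored form: a product of
distinct linear factors `uX + v` with `u > 0` and of quadratic factors `aX² + bX + c` with
`b² < 4ac`. The real roots of such a product are exactly the numbers `-v/u`, so the numbers of
positive and negative roots are read off from the signs of the `v`, and the roots are simple as soon
as the ratios `v/u` are distinct. The sign pattern is obtained by expanding the product. All the
coefficients are integers, so each certificate is checked by a finite integer computation
(`Cert.Valid`), and `realizable_of_valid` turns a valid certificate into a realization.

The certificates are collected in `table`, for the patterns `Σ_{m,n,q}` with `m ≤ q`. The
involution `i_r` replaces every factor by its reciprocal polynomial; applying this to the table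
gives the certificates for `m > q`. Since `Σ_{m,n,q}` has two sign changes, admissibility means
`pos ∈ {0, 2}` and `neg ∈ {1, 3, 5, 7}`, and it remains to see that every such couple is either in
the orbit of one of the exceptions or has a certificate (`table_complete`).
-/

open Polynomial

/-- Alternating blocks of signs, starting with sign `s`. -/
def altBlocks : List ℕ → ℝ → List ℝ
  | [], _ => []
  | m :: rest, s => List.replicate m s ++ altBlocks rest (-s)

/-- The sign pattern `Σ_{m₁,…,m_s}`. -/
def sigmaPat (blocks : List ℕ) : List ℝ := altBlocks blocks 1

/-- The real polynomial `Q` defines the sign pattern `σ`. -/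
def HasSignPattern (Q : Polynomial ℝ) (σ : List ℝ) : Prop :=
  Q.natDegree + 1 = σ.length ∧
  ∀ i : Fin σ.length, σ.get i * Q.coeff (Q.natDegree - (i : ℕ)) > 0

/-- `Q` has exactly `pos` positive and `neg` negative real roots, all simple. -/
def RootData (Q : Polynomial ℝ) (pos neg : ℕ) : Prop :=
  Q.roots.countP (fun x => 0 < x) = pos ∧
  Q.roots.countP (fun x => x < 0) = neg ∧
  Q.roots.Nodup

/-- The couple `(σ, (pos, neg))` is realizable. -/
def Realizable (σ : List ℝ) (pos neg : ℕ) : Prop :=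
  ∃ Q : Polynomial ℝ, HasSignPattern Q σ ∧ RootData Q pos neg

/-- `σ` is a genuine sign pattern: it begins with `+` and all its entries are `±1`. -/
def IsSignPatternList (σ : List ℝ) : Prop :=
  σ.head? = some 1 ∧ ∀ s ∈ σ, s = 1 ∨ s = -1

/-- Number of sign changes in the string `σ`. -/
noncomputable def signChanges (σ : List ℝ) : ℕ := (σ.zip σ.tail).countP (fun p => p.1 * p.2 < 0)

/-- `(pos, neg)` is admissible for the sign pattern `σ` (Descartes' rule of signs). -/
def Admissible (σ : List ℝ) (pos neg : ℕ) : Prop :=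
  pos ≤ signChanges σ ∧ neg ≤ (σ.length - 1) - signChanges σ ∧
  Even (signChanges σ - pos) ∧ Even ((σ.length - 1) - signChanges σ - neg)

/-- A couple: a sign pattern together with the pair `(pos, neg)`. -/
abbrev Couple := List ℝ × ℕ × ℕ

/-- The involution `i_m` on sign patterns: `σ(Q) ↦ (-1)^d σ(Q(-x))`. -/
def imPat (σ : List ℝ) : List ℝ := σ.mapIdx fun i s => (-1 : ℝ) ^ i * s

/-- The involution `i_r` on sign patterns: `σ(Q) ↦ σ(x^d Q(1/x) / Q(0))`. -/
def irPat (σ : List ℝ) : List ℝ := σ.reverse.map fun s => σ.getLastD 1 * s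

/-- `i_m` on couples: it swaps `pos` and `neg`. -/
def imC (C : Couple) : Couple := (imPat C.1, C.2.2, C.2.1)

/-- `i_r` on couples: it preserves `(pos, neg)`. -/
def irC (C : Couple) : Couple := (irPat C.1, C.2.1, C.2.2)

/-- `D` lies in the `ℤ₂ × ℤ₂`-orbit of `C`. -/
def SameOrbit (C D : Couple) : Prop :=
  D = C ∨ D = imC C ∨ D = irC C ∨ D = imC (irC C)

/-! ### Integer polynomials as coefficient lists -/

/-- The real polynomial whose coefficients, from the constant term upwards, are listed in `l`. -/
noncomputable def toPoly : List ℤ → ℝ[X]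
  | [] => 0
  | a :: l => C (a : ℝ) + X * toPoly l

/-- Sum of coefficient lists. -/
def addL : List ℤ → List ℤ → List ℤ
  | [], l => l
  | l, [] => l
  | a :: l, b :: k => (a + b) :: addL l k

/-- Product of coefficient lists. -/
def mulL : List ℤ → List ℤ → List ℤ
  | [], _ => []
  | a :: l, k => addL (k.map (a * ·)) (0 :: mulL l k)

lemma toPoly_addL (l k : List ℤ) : toPoly (addL l k) = toPoly l + toPoly k := by
  fun_induction addL l k with
  | case1 l => simp [toPoly]
  | case2 l => simp [toPoly]
  | case3 a l b k ih =>
    simp only [toPoly, ih, Int.cast_add, C_add]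
    ring

lemma toPoly_map_mul (a : ℤ) (l : List ℤ) : toPoly (l.map (a * ·)) = C (a : ℝ) * toPoly l := by
  induction l with
  | nil => simp [toPoly]
  | cons b l ih =>
    simp only [List.map_cons, toPoly, ih, Int.cast_mul, C_mul]
    ring

lemma toPoly_mulL (l k : List ℤ) : toPoly (mulL l k) = toPoly l * toPoly k := by
  induction l with
  | nil => simp [toPoly, mulL]
  | cons a l ih =>
    simp only [mulL, toPoly_addL, toPoly_map_mul, toPoly, ih, Int.cast_zero, C_0]
    ring

lemma coeff_toPoly (l : List ℤ) (k : ℕ) : (toPoly l).coeff k = (l.getD k 0 : ℤ) := by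
  induction l generalizing k with
  | nil => simp [toPoly]
  | cons a l ih => cases k <;> simp [toPoly, ih, coeff_C, -map_intCast]

lemma toPoly_prod (L : List (List ℤ)) : toPoly (L.foldr mulL [1]) = (L.map toPoly).prod := by
  induction L with
  | nil => simp [toPoly]
  | cons a L ih => simp [toPoly_mulL, ih]

/-! ### Certificates -/

/-- A polynomial in factored form: a list of linear factors `uX + v`, stored as `(u, v)`, and a list
of quadratic factors `aX² + bX + c`, stored as `(a, b, c)`. -/
abbrev Cert := List (ℤ × ℤ) × List (ℤ × ℤ × ℤ)

namespace Cert

/-- The coefficient lists of the linear factors. -/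
def linL (c : Cert) : List (List ℤ) := c.1.map fun f => [f.2, f.1]

/-- The coefficient lists of the quadratic factors. -/
def quadL (c : Cert) : List (List ℤ) := c.2.map fun f => [f.2.2, f.2.1, f.1]

/-- The coefficients of the expanded product, from the constant term upwards. -/
def coeffs (c : Cert) : List ℤ := (c.linL ++ c.quadL).foldr mulL [1]

/-- The number of positive roots, provided the linear factors have positive leading coefficient. -/
def pos (c : Cert) : ℕ := c.1.countP fun f => f.2 < 0

/-- The number of negative roots, provided the linear factors have positive leading coefficient. -/
def neg (c : Cert) : ℕ := c.1.countP fun f => 0 < f.2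

/-- The certificate for the reciprocal polynomial, with every linear factor multiplied by `±1` so
that its leading coefficient is positive. -/
def rev (c : Cert) : Cert :=
  (c.1.map fun f => if 0 < f.2 then (f.2, f.1) else (-f.2, -f.1),
    c.2.map fun f => (f.2.2, f.2.1, f.1))

/-- The entries of `Σ_{m,n,q}` as integers. -/
def signs (s : ℕ × ℕ × ℕ) : List ℤ :=
  List.replicate s.1 1 ++ (List.replicate s.2.1 (-1) ++ List.replicate s.2.2 1)

/-- The factors are as required (positive leading coefficients, pairwise distinct real roots,
negative discriminants), and the product has degree 9 and the sign pattern `Σ_s`. -/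
def Valid (s : ℕ × ℕ × ℕ) (c : Cert) : Prop :=
  (∀ f ∈ c.1, 0 < f.1) ∧ c.1.Pairwise (fun f g => f.2 * g.1 ≠ g.2 * f.1) ∧
  (∀ f ∈ c.2, f.2.1 ^ 2 < 4 * f.1 * f.2.2) ∧
  c.coeffs.length = 10 ∧ (signs s).length = 10 ∧
  ∀ i < 10, 0 < (signs s).getD i 0 * c.coeffs.getD (9 - i) 0

instance (s : ℕ × ℕ × ℕ) (c : Cert) : Decidable (Valid s c) := by
  unfold Valid
  infer_instance

end Cert

lemma roots_quadratics (L : List (ℤ × ℤ × ℤ)) (hL : ∀ f ∈ L, f.2.1 ^ 2 < 4 * f.1 * f.2.2) :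
    (L.map fun f => toPoly [f.2.2, f.2.1, f.1]).prod ≠ 0 ∧
    (L.map fun f => toPoly [f.2.2, f.2.1, f.1]).prod.roots = 0 := by
  induction L with
  | nil => simp
  | cons f L ih =>
    obtain ⟨h0, hr⟩ := ih fun g hg => hL g (List.mem_cons_of_mem _ hg)
    have hf : (f.2.1 : ℝ) ^ 2 < 4 * f.1 * f.2.2 := by exact_mod_cast hL f List.mem_cons_self
    -- completing the square, `4a(ax² + bx + c) = (2ax + b)² + (4ac - b²)`
    have hev : ∀ x : ℝ, (toPoly [f.2.2, f.2.1, f.1]).eval x ≠ 0 := by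
      intro x hx
      simp [toPoly] at hx
      nlinarith [sq_nonneg (2 * (f.1 : ℝ) * x + f.2.1), congrArg (4 * (f.1 : ℝ) * ·) hx]
    have hne : toPoly [f.2.2, f.2.1, f.1] ≠ 0 := fun h => hev 0 (by simp [h])
    have hroots : (toPoly [f.2.2, f.2.1, f.1]).roots = 0 :=
      Multiset.eq_zero_of_forall_notMem fun x hx => hev x (isRoot_of_mem_roots hx)
    simp only [List.map_cons, List.prod_cons]
    refine ⟨mul_ne_zero hne h0, ?_⟩
    rw [roots_mul (mul_ne_zero hne h0), hroots, hr, add_zero]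

lemma roots_linears (L : List (ℤ × ℤ)) (hL : ∀ f ∈ L, 0 < f.1) :
    (L.map fun f => toPoly [f.2, f.1]).prod ≠ 0 ∧
    (L.map fun f => toPoly [f.2, f.1]).prod.roots =
      (L.map fun f => -(f.2 : ℝ) / f.1 : List ℝ) := by
  induction L with
  | nil => simp
  | cons f L ih =>
    obtain ⟨h0, hr⟩ := ih fun g hg => hL g (List.mem_cons_of_mem _ hg)
    have hf : (f.1 : ℝ) ≠ 0 := by exact_mod_cast (hL f List.mem_cons_self).ne'
    have heq : toPoly [f.2, f.1] = C (f.1 : ℝ) * X + C (f.2 : ℝ) := by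
      simp only [toPoly]
      ring
    have hroots : (toPoly [f.2, f.1]).roots = {-(f.2 : ℝ) / f.1} := by
      rw [heq, roots_C_mul_X_add_C _ hf]
      congr 1
      ring
    have hne : toPoly [f.2, f.1] ≠ 0 := by
      intro h
      simp [h] at hroots
    simp only [List.map_cons, List.prod_cons]
    refine ⟨mul_ne_zero hne h0, ?_⟩
    rw [roots_mul (mul_ne_zero hne h0), hroots, hr]
    rfl

lemma sigmaPat_eq (s : ℕ × ℕ × ℕ) :
    sigmaPat [s.1, s.2.1, s.2.2] = (Cert.signs s).map (fun a : ℤ => (a : ℝ)) := by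
  simp [sigmaPat, altBlocks, Cert.signs]

lemma realizable_of_valid (s : ℕ × ℕ × ℕ) (c : Cert) (h : Cert.Valid s c) :
    Realizable (sigmaPat [s.1, s.2.1, s.2.2]) c.pos c.neg := by
  obtain ⟨hlin, hdist, hquad, hlen, hslen, hsign⟩ := h
  have hQ : toPoly c.coeffs = (c.1.map fun f => toPoly [f.2, f.1]).prod *
      (c.2.map fun f => toPoly [f.2.2, f.2.1, f.1]).prod := by
    rw [Cert.coeffs, toPoly_prod]
    simp [Cert.linL, Cert.quadL, Function.comp_def]
  have hroots : (toPoly c.coeffs).roots = (c.1.map fun f => -(f.2 : ℝ) / f.1 : List ℝ) := by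
    obtain ⟨h1, h2⟩ := roots_linears c.1 hlin
    obtain ⟨h3, h4⟩ := roots_quadratics c.2 hquad
    rw [hQ, roots_mul (mul_ne_zero h1 h3), h2, h4, add_zero]
  have hdeg : (toPoly c.coeffs).natDegree = 9 := by
    apply natDegree_eq_of_le_of_coeff_ne_zero
    · rw [natDegree_le_iff_coeff_eq_zero]
      intro k hk
      rw [coeff_toPoly, List.getD_eq_default _ _ (by omega), Int.cast_zero]
    · rw [coeff_toPoly]
      intro h0
      have h9 := hsign 0 (by norm_num)
      rw [Int.cast_eq_zero.mp h0] at h9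
      simp at h9
  refine ⟨toPoly c.coeffs, ⟨?_, ?_⟩, ?_, ?_, ?_⟩
  · simp [sigmaPat_eq, hdeg, hslen]
  · rw [sigmaPat_eq, hdeg]
    rintro ⟨i, hi⟩
    rw [List.length_map] at hi
    have := hsign i (by omega)
    rw [List.getD_eq_getElem _ _ hi] at this
    simp only [List.get_eq_getElem, List.getElem_map, coeff_toPoly]
    exact_mod_cast this
  · rw [hroots, Multiset.coe_countP, List.countP_map, Cert.pos]
    apply List.countP_congr
    intro f hf
    have hf1 : (0 : ℝ) < f.1 := by exact_mod_cast hlin f hf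
    simp [div_pos_iff_of_pos_right hf1]
  · rw [hroots, Multiset.coe_countP, List.countP_map, Cert.neg]
    apply List.countP_congr
    intro f hf
    have hf1 : (0 : ℝ) < f.1 := by exact_mod_cast hlin f hf
    simp [div_lt_iff₀ hf1]
  · rw [hroots, Multiset.coe_nodup, List.Nodup, List.pairwise_map]
    refine hdist.imp_of_mem fun {f g} hf hg hne heq => hne ?_
    have hf1 : (f.1 : ℝ) ≠ 0 := by exact_mod_cast (hlin f hf).ne'
    have hg1 : (g.1 : ℝ) ≠ 0 := by exact_mod_cast (hlin g hg).ne'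
    rw [div_eq_div_iff hf1 hg1] at heq
    have : (f.2 : ℝ) * g.1 = g.2 * f.1 := by linarith
    exact_mod_cast this

/-! ### The certificates -/

/-- Certificates for the patterns `Σ_{m,n,q}` with `m ≤ q`, grouped by `(m, n, q)`. Within a group
the pairs `(pos, neg)` occur in the order `(2,7)`, `(2,5)`, `(2,3)`, `(2,1)`, `(0,7)`, `(0,5)`,
`(0,3)`, `(0,1)`, the exceptional couples being left out. -/
def table : List ((ℕ × ℕ × ℕ) × List Cert) := [
  ((1, 8, 1), [
    ([(8, 3), (8, 5), (3, 2), (7, 5), (4, 3), (5, 8), (5, 13), (19, -2), (2, -15)], []),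
    ([(7, 4), (3, 2), (4, 3), (1, 1), (4, 5), (7, -1), (1, -15)], [(15, -6, 3)]),
    ([(3, 2), (1, 1), (2, 3), (3, -1), (2, -5)], [(2, -1, 2), (2, -1, 5)]),
    ([(1, 1), (2, -1), (2, -3)], [(3, -3, 2), (2, 1, 1), (2, 2, 1)]),
    ([(3, 2)], [(7, 1, 3), (9, -6, 4), (9, 9, 4), (7, -9, 3)])]),
  ((1, 7, 2), [
    ([(11, 2), (9, 2), (3, 1), (2, 1), (3, 2), (1, 1), (2, 3), (11, -1), (1, -9)], []),
    ([(11, 2), (3, 4), (2, 3), (3, 8), (1, 3), (5, -3), (1, -8)], [(2, -2, 3)]),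
    ([(5, 1), (3, 1), (2, 1), (6, -1), (1, -2)], [(11, 2, 1), (8, -2, 1)]),
    ([(5, 1), (3, -1), (2, -9)], [(5, 6, 2), (1, -1, 1), (2, 2, 2)]),
    ([(1, 1), (6, 7), (5, 7)], [(4, -13, 11), (5, -7, 11), (4, 4, 8)]),
    ([(3, 1)], [(3, -4, 6), (3, -9, 7), (1, 1, 2), (3, 7, 5)])]),
  ((1, 6, 3), [
    ([(11, 3), (7, 2), (3, 1), (11, 4), (8, 3), (5, 2), (1, 1), (6, -1), (2, -11)], []),
    ([(3, 2), (1, 1), (2, 3), (1, 2), (1, 4), (1, -1), (1, -11)], [(1, 0, 7)]),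
    ([(11, 4), (5, 4), (1, 1), (7, -4), (1, -9)], [(1, -1, 1), (4, 3, 1)]),
    ([(2, 1), (5, -2), (2, -7)], [(5, 4, 1), (3, 4, 2), (2, 0, 5)]),
    ([(2, 1), (4, 5), (3, 5)], [(2, 5, 10), (2, -3, 10), (2, -9, 11)]),
    ([(2, 3)], [(11, 6, 1), (3, -10, 9), (3, -3, 8), (3, 5, 7)])]),
  ((1, 5, 4), [
    ([(11, 3), (7, 2), (2, 1), (5, 3), (4, 3), (1, 1), (1, 2), (2, -1), (1, -9)], []),
    ([(10, 1), (10, 3), (7, 3), (1, 1), (3, 4), (3, -2), (2, -7)], [(2, 0, 5)]),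
    ([(5, 2), (2, 1), (5, 3), (5, -3), (1, -3)], [(4, 1, 1), (2, -1, 3)]),
    ([(5, 2), (3, -2), (2, -3)], [(3, 4, 2), (8, 1, 3), (3, -2, 2)]),
    ([(8, 3), (2, 1), (7, 4), (4, 3), (5, 4)], [(3, -1, 8), (3, -9, 7)]),
    ([(5, 1), (2, 1), (3, 2)], [(2, 4, 3), (2, -1, 4), (2, -6, 5)]),
    ([(3, 4)], [(1, -6, 10), (5, 6, 2), (1, 4, 6), (1, -1, 10)])]),
  ((1, 4, 5), [
    ([(11, 2), (9, 2), (3, 1), (2, 1), (3, 2), (1, 1), (2, 9), (3, -2), (1, -10)], []),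
    ([(7, 1), (11, 2), (7, 2), (3, 2), (1, 1), (1, -1), (2, -7)], [(1, 0, 1)]),
    ([(3, 2), (1, 1), (1, 2), (2, -5), (2, -7)], [(2, 4, 8), (1, 0, 4)]),
    ([(4, 3), (2, -1), (1, -2)], [(7, -1, 1), (3, 1, 1), (9, 5, 1)]),
    ([(7, 1), (11, 3), (7, 3), (2, 1), (3, 2)], [(3, -7, 5), (1, 0, 1)]),
    ([(7, 3), (4, 3), (1, 2)], [(1, -6, 10), (1, 1, 6), (1, 1, 1)]),
    ([(5, 2)], [(2, 4, 3), (3, 3, 1), (2, 1, 9), (1, -5, 7)])]),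
  ((1, 3, 6), [
    ([(9, 1), (5, 1), (3, 1), (2, 1), (3, 2), (1, 1), (1, 2), (2, -3), (2, -11)], []),
    ([(6, 1), (5, 1), (9, 2), (4, 1), (5, 2), (3, -2), (2, -9)], [(3, 3, 1)]),
    ([(1, 1), (3, 4), (3, 5), (3, -4), (1, -3)], [(1, 1, 1), (4, -3, 2)]),
    ([(7, 6), (1, -1), (3, -7)], [(6, 9, 4), (10, -6, 3), (10, 6, 3)]),
    ([(13, 2), (3, 1), (5, 2), (3, 2), (1, 1), (2, 3), (2, 5)], [(1, -7, 13)]),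
    ([(7, 2), (2, 1), (4, 3), (5, 4), (4, 5)], [(1, -5, 8), (8, 11, 4)]),
    ([(7, 4), (6, 7), (5, 6)], [(1, -6, 10), (3, 1, 9), (2, 4, 6)]),
    ([(3, 2)], [(1, -4, 5), (8, 5, 1), (8, 3, 2), (1, 1, 2)])]),
  ((1, 2, 7), [
    ([(11, 1), (8, 1), (4, 1), (7, 2), (3, 1), (3, 2), (2, 3), (2, -7), (1, -4)], []),
    ([(3, 1), (5, 2), (2, 1), (1, 1), (2, 3), (1, -3), (1, -10)], [(2, 0, 3)]),
    ([(3, 2), (1, 1), (2, 3), (2, -5), (2, -7)], [(2, 0, 1), (2, 1, 1)]),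
    ([(2, 1), (2, -5), (1, -4)], [(1, 2, 2), (3, 3, 2), (3, -3, 2)]),
    ([(11, 1), (10, 1), (9, 1), (4, 1), (2, 1), (4, 3), (3, 4)], [(1, -6, 11)]),
    ([(7, 6), (1, 1), (6, 7), (5, 6), (5, 7)], [(1, -1, 4), (1, -5, 10)]),
    ([(8, 1), (9, 5), (2, 3)], [(1, -4, 6), (3, 3, 1), (7, -5, 3)]),
    ([(1, 1)], [(1, 2, 2), (2, 5, 4), (1, -2, 4), (1, -5, 10)])]),
  ((1, 1, 8), [
    ([(19, 1), (6, 1), (2, 1), (5, 3), (3, 2), (4, 3), (1, 1), (3, -14), (1, -31)], []),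
    ([(10, 3), (3, 1), (8, 3), (7, 3), (1, 1), (3, -7), (2, -11)], [(1, -1, 1)]),
    ([(9, 1), (6, 1), (4, 1), (1, -2), (1, -3)], [(3, 2, 1), (3, -1, 1)]),
    ([(7, 3), (3, -8), (1, -4)], [(10, 10, 3), (4, -1, 3), (4, 3, 1)]),
    ([(22, 1), (14, 3), (11, 3), (7, 2), (7, 3), (3, 2), (1, 1)], [(1, -8, 34)]),
    ([(6, 1), (3, 1), (7, 6), (6, 7), (5, 6)], [(1, -1, 4), (2, -6, 11)]),
    ([(4, 1), (7, 2), (5, 2)], [(1, -2, 5), (4, -3, 2), (3, 3, 2)]),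
    ([(4, 1)], [(7, 8, 3), (4, 5, 4), (2, 0, 2), (1, -4, 11)])]),
  ((2, 6, 2), [
    ([(5, 3), (3, 2), (4, 3), (1, 1), (3, 4), (3, 5), (2, 5), (5, -1), (1, -5)], []),
    ([(4, 1), (3, 1), (3, 2), (1, 1), (2, 5), (7, -1), (1, -4)], [(3, 4, 2)]),
    ([(4, 1), (3, 1), (1, 2), (5, -1), (1, -4)], [(3, 0, 2), (1, 3, 3)]),
    ([(2, 1), (3, -1), (1, -3)], [(2, 3, 2), (1, 2, 2), (2, 1, 3)]),
    ([(3, 1), (1, 3), (1, 5)], [(1, -5, 7), (1, 3, 8), (1, -2, 8)]),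
    ([(3, 2)], [(6, -4, 4), (7, 5, 4), (8, -11, 4), (9, 10, 3)])]),
  ((2, 5, 3), [
    ([(8, 1), (3, 1), (5, 2), (3, 2), (1, 1), (2, 3), (2, 7), (7, -2), (1, -5)], []),
    ([(5, 3), (3, 2), (4, 3), (1, 1), (3, 4), (5, -3), (1, -3)], [(1, 0, 2)]),
    ([(1, 1), (3, 7), (1, 3), (4, -3), (1, -4)], [(1, -1, 4), (5, 5, 2)]),
    ([(2, 3), (3, -2), (1, -2)], [(2, 2, 1), (2, -1, 2), (1, 2, 2)]),
    ([(5, 3), (3, 2), (1, 1), (3, 4), (1, 3)], [(2, -6, 5), (2, -1, 6)]),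
    ([(1, 1), (6, 7), (4, 5)], [(4, -10, 7), (2, -1, 4), (4, 5, 3)]),
    ([(3, 5)], [(3, -2, 5), (3, -8, 6), (2, 3, 3), (4, 4, 2)])]),
  ((2, 4, 4), [
    ([(9, 1), (9, 4), (3, 2), (4, 3), (5, 4), (1, 1), (3, 8), (7, -4), (1, -4)], []),
    ([(4, 1), (5, 2), (3, 2), (1, 1), (1, 2), (3, -2), (1, -5)], [(2, 8, 9)]),
    ([(11, 1), (3, 2), (2, 9), (1, -1), (1, -3)], [(7, 3, 1), (1, 1, 7)]),
    ([(2, 1), (4, -3), (1, -1)], [(10, 7, 2), (3, 4, 2), (2, 0, 1)]),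
    ([(2, 1), (1, 1), (2, 3), (2, 5), (1, 3)], [(1, 0, 6), (1, -5, 7)]),
    ([(7, 4), (5, 3), (2, 3)], [(3, 3, 1), (2, 0, 3), (3, -7, 5)]),
    ([(1, 1)], [(1, 1, 1), (2, -8, 9), (1, 5, 8), (1, 0, 3)])]),
  ((2, 3, 5), [
    ([(8, 3), (5, 2), (7, 3), (3, 5), (3, 7), (1, 3), (1, 8), (1, -2), (1, -7)], []),
    ([(8, 3), (5, 3), (4, 3), (1, 1), (3, 4), (3, -4), (3, -5)], [(3, 3, 1)]),
    ([(4, 1), (5, 2), (1, 3), (3, -2), (2, -5)], [(4, -1, 1), (4, 4, 2)]),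
    ([(1, 2), (2, -3), (1, -2)], [(2, 0, 1), (3, 3, 1), (2, 5, 4)]),
    ([(8, 1), (8, 3), (7, 3), (4, 3), (1, 1), (3, 4), (3, 7)], [(2, -6, 5)]),
    ([(5, 1), (3, 2), (1, 1), (3, 4), (3, 10)], [(1, 3, 3), (1, -5, 7)]),
    ([(2, 1), (3, 2), (2, 3)], [(1, 3, 4), (2, -7, 7), (3, 2, 2)]),
    ([(1, 1)], [(1, 2, 2), (1, 2, 3), (1, -4, 5), (4, 3, 1)])]),
  ((2, 2, 6), [
    ([(5, 1), (5, 2), (2, 1), (3, 2), (1, 2), (1, 4), (2, 11), (1, -4), (1, -6)], []),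
    ([(5, 2), (2, 1), (1, 1), (2, 3), (1, 8), (1, -2), (1, -4)], [(3, -1, 1)]),
    ([(5, 2), (2, 9), (1, 6), (2, -11), (1, -6)], [(2, 5, 5), (2, 3, 2)]),
    ([(2, 1), (2, -3), (1, -2)], [(2, 2, 1), (1, 3, 3), (4, -2, 1)]),
    ([(7, 2), (5, 2), (2, 1), (3, 2), (1, 1), (2, 3), (1, 3)], [(1, -5, 7)]),
    ([(11, 2), (2, 1), (3, 2), (1, 1), (2, 11)], [(8, -4, 2), (1, -2, 2)]),
    ([(1, 1), (3, 4), (2, 3)], [(3, -7, 6), (4, 0, 1), (11, 6, 2)]),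
    ([(1, 1)], [(11, 3, 1), (2, -3, 2), (4, 7, 4), (10, -3, 1)])]),
  ((2, 1, 7), [
    ([(10, 1), (9, 2), (3, 1), (5, 2), (2, 1), (3, 2), (1, 5), (1, -3), (2, -7)], []),
    ([(7, 2), (7, 3), (5, 3), (4, 3), (2, 5), (3, -5), (1, -2)], [(4, -3, 2)]),
    ([(11, 2), (5, 2), (1, 5), (1, -3), (2, -7)], [(2, 5, 4), (2, -2, 3)]),
    ([(1, 9), (1, -3), (1, -4)], [(1, 0, 1), (3, 4, 2), (2, -1, 1)]),
    ([(9, 1), (11, 2), (5, 1), (7, 2), (5, 2), (2, 1), (1, 3)], [(1, -3, 4)]),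
    ([(9, 1), (6, 1), (5, 2), (3, 2), (1, 3)], [(1, -4, 9), (3, 3, 1)]),
    ([(4, 1), (3, 5), (1, 2)], [(4, 5, 2), (9, 0, 3), (1, -4, 9)]),
    ([(2, 3)], [(2, -6, 7), (1, 1, 2), (2, -3, 3), (2, 5, 4)])]),
  ((3, 4, 3), [
    ([(4, 1), (5, 2), (3, 2), (2, 3), (1, 3), (1, 5), (1, 9), (2, -1), (2, -9)], []),
    ([(9, 1), (9, 2), (7, 2), (2, 5), (2, 7), (7, -2), (1, -1)], [(5, 1, 2)]),
    ([(5, 1), (5, 2), (2, 3), (5, -2), (2, -3)], [(1, 2, 2), (2, 1, 2)]),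
    ([(1, 1), (2, -1), (2, -3)], [(3, 1, 1), (1, 1, 1), (1, 1, 2)]),
    ([(7, 2), (3, 1), (2, 1), (1, 1), (2, 3)], [(7, -7, 2), (7, 0, 2)]),
    ([(7, 1), (3, 7), (1, 7)], [(1, 2, 2), (1, 0, 2), (3, -9, 7)]),
    ([(3, 4)], [(6, 6, 2), (1, 3, 6), (3, -10, 9), (1, 0, 6)])]),
  ((3, 3, 4), [
    ([(8, 1), (7, 1), (4, 1), (1, 1), (2, 3), (2, 5), (1, 5), (2, -1), (1, -2)], []),
    ([(3, 1), (2, 1), (3, 2), (1, 1), (1, 5), (3, -2), (2, -3)], [(7, 5, 1)]),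
    ([(3, 2), (1, 1), (2, 5), (3, -2), (1, -1)], [(7, -2, 2), (1, 1, 1)]),
    ([(3, 4), (2, -3), (3, -5)], [(3, -1, 3), (1, 2, 2), (1, 1, 5)]),
    ([(8, 3), (7, 5), (4, 3), (7, 6), (1, 1), (2, 3), (1, 9)], [(4, -11, 8)]),
    ([(10, 3), (3, 2), (1, 1), (3, 7), (1, 8)], [(7, 6, 2), (4, -9, 6)]),
    ([(3, 1), (5, 2), (3, 2)], [(5, -6, 2), (6, 3, 1), (2, 1, 1)]),
    ([(2, 5)], [(9, 3, 1), (3, -9, 7), (1, 3, 3), (1, 2, 4)])]),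
  ((3, 2, 5), [
    ([(4, 1), (5, 2), (3, 2), (4, 3), (3, 4), (2, 3), (1, 9), (3, -4), (2, -5)], []),
    ([(8, 1), (2, 1), (1, 1), (2, 7), (1, 4), (1, -1), (1, -2)], [(10, 4, 1)]),
    ([(1, 1), (3, 5), (4, 11), (5, -6), (4, -5)], [(4, 2, 1), (7, 5, 1)]),
    ([(11, 1), (1, -1), (1, -2)], [(1, 2, 5), (3, 1, 1), (4, 5, 2)]),
    ([(6, 1), (5, 2), (3, 2), (1, 1), (2, 3), (1, 2), (2, 5)], [(2, -6, 5)]),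
    ([(5, 2), (2, 3), (2, 5), (1, 3), (1, 6)], [(6, 0, 2), (1, -4, 5)]),
    ([(6, 1), (3, 1), (3, 2)], [(1, 5, 10), (2, -5, 4), (5, 6, 2)]),
    ([(2, 1)], [(2, -7, 7), (2, 5, 4), (3, -1, 2), (1, 3, 11)])]),
  ((3, 1, 6), [
    ([(13, 2), (11, 2), (5, 1), (9, 2), (3, 1), (1, 5), (1, 13), (2, -3), (1, -2)], []),
    ([(5, 1), (7, 2), (3, 1), (2, 3), (1, 7), (3, -2), (1, -1)], [(8, -2, 1)]),
    ([(8, 3), (1, 3), (1, 7), (1, -1), (2, -3)], [(5, -2, 1), (7, 5, 1)]),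
    ([(3, 2), (1, -1), (3, -4)], [(1, 2, 4), (5, -3, 2), (5, 4, 3)]),
    ([(6, 1), (5, 1), (7, 2), (2, 1), (3, 2), (2, 3), (1, 6)], [(1, -2, 2)]),
    ([(7, 2), (5, 2), (3, 2), (2, 3), (2, 11)], [(1, -5, 9), (2, 7, 7)]),
    ([(2, 1), (1, 4), (1, 5)], [(2, 2, 1), (3, -2, 2), (1, -3, 5)]),
    ([(1, 1)], [(2, -5, 5), (4, 2, 2), (1, 3, 3), (6, 3, 1)])]),
  ((4, 2, 4), [
    ([(3, 1), (8, 3), (2, 1), (3, 2), (4, 3), (3, 4), (3, 8), (3, -2), (4, -3)], []),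
    ([(3, 1), (8, 3), (1, 1), (3, 4), (1, 3), (1, -1), (3, -4)], [(2, 7, 7)]),
    ([(8, 3), (1, 1), (3, 4), (4, -3), (1, -1)], [(11, 0, 1), (3, -2, 10)]),
    ([(3, 5), (1, -1), (3, -4)], [(1, 2, 10), (4, -1, 2), (4, 8, 5)]),
    ([(11, 2), (4, 1), (3, 1), (2, 1), (1, 1), (2, 3), (2, 5)], [(5, -6, 2)]),
    ([(10, 1), (5, 1), (7, 2), (5, 3), (2, 3)], [(3, 3, 5), (5, -6, 2)]),
    ([(3, 2), (4, 3), (3, 4)], [(3, -4, 2), (6, -1, 1), (2, -1, 6)]),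
    ([(4, 3)], [(2, 6, 5), (2, 2, 8), (5, -2, 2), (3, -5, 3)])]),
  ((4, 1, 5), [
    ([(12, 1), (11, 1), (9, 1), (11, 2), (2, 7), (1, 5), (1, 8), (3, -2), (1, -1)], []),
    ([(4, 1), (5, 2), (2, 5), (2, 7), (1, 6), (3, -2), (1, -1)], [(7, -1, 1)]),
    ([(7, 2), (3, 2), (1, 4), (1, -1), (2, -3)], [(2, 3, 9), (5, -1, 2)]),
    ([(2, 7), (2, -3), (1, -2)], [(4, 4, 2), (2, 0, 1), (1, 0, 9)]),
    ([(7, 2), (5, 2), (2, 1), (3, 2), (1, 1), (2, 3), (1, 3)], [(2, -3, 2)]),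
    ([(8, 1), (3, 2), (1, 1), (2, 3), (2, 5)], [(5, -5, 2), (6, 1, 1)]),
    ([(5, 1), (2, 1), (3, 4)], [(4, -5, 3), (1, 0, 3), (5, 0, 1)]),
    ([(2, 1)], [(5, 0, 2), (7, 9, 3), (6, -7, 3), (2, 0, 4)])])]

/-- `table` together with its image under `i_r`. -/
def fullTable : List ((ℕ × ℕ × ℕ) × List Cert) :=
  table ++ table.map fun g => ((g.1.2.2, g.1.2.1, g.1.1), g.2.map Cert.rev)

/-- The exceptional couples `(Σ_{m,n,q}, (0, neg))`, stored as `((m, n, q), neg)`. -/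
def exceptions : List ((ℕ × ℕ × ℕ) × ℕ) :=
  [((1, 8, 1), 3), ((1, 8, 1), 5), ((1, 8, 1), 7), ((1, 7, 2), 5), ((1, 7, 2), 7), ((1, 6, 3), 5),
   ((1, 6, 3), 7), ((2, 6, 2), 5), ((2, 6, 2), 7), ((1, 5, 4), 7), ((1, 4, 5), 7), ((2, 4, 4), 7),
   ((2, 5, 3), 7), ((3, 4, 3), 7)]

lemma fullTable_valid : ∀ g ∈ fullTable, ∀ c ∈ g.2, Cert.Valid g.1 c := by
  decide +kernel

/-- The couple `(Σ_s, (pos, neg))` is the one of some certificate in `fullTable`. -/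
def Covered (s : ℕ × ℕ × ℕ) (pos neg : ℕ) : Prop :=
  ∃ g ∈ fullTable, g.1 = s ∧ ∃ c ∈ g.2, Cert.pos c = pos ∧ Cert.neg c = neg

instance (s : ℕ × ℕ × ℕ) (pos neg : ℕ) : Decidable (Covered s pos neg) := by
  unfold Covered
  infer_instance

/-- The couple `(Σ_{m,n,q}, (pos, neg))` or its image under `i_r` is listed in `exceptions`. -/
def Exceptional (m n q pos neg : ℕ) : Prop :=
  pos = 0 ∧ (((m, n, q), neg) ∈ exceptions ∨ ((q, n, m), neg) ∈ exceptions)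

instance (m n q pos neg : ℕ) : Decidable (Exceptional m n q pos neg) := by
  unfold Exceptional
  infer_instance

set_option synthInstance.maxSize 2000 in
lemma table_complete : ∀ m < 9, ∀ n < 9, ∀ q < 9, 1 ≤ m ∧ 1 ≤ n ∧ 1 ≤ q ∧ m + n + q = 10 →
    ∀ pos ∈ [0, 2], ∀ neg ∈ [1, 3, 5, 7],
      Exceptional m n q pos neg ∨ Covered (m, n, q) pos neg := by
  decide +kernel

/-! ### Admissible pairs and exceptional orbits -/

lemma signChanges_sigmaPat (m n q : ℕ) (hm : 1 ≤ m) (hn : 1 ≤ n) (hq : 1 ≤ q) :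
    signChanges (sigmaPat [m, n, q]) = 2 := by
  have hcons : ∀ (a b : ℝ) (l : List ℝ), signChanges (a :: b :: l) =
      signChanges (b :: l) + if a * b < 0 then 1 else 0 := by
    intro a b l
    simp [signChanges, List.countP_cons]
  -- only the last sign of a block can contribute
  have hblock : ∀ (k : ℕ) (a b : ℝ) (l : List ℝ),
      signChanges (List.replicate (k + 1) a ++ b :: l) =
        signChanges (b :: l) + if a * b < 0 then 1 else 0 := by
    intro k a b l
    induction k with
    | zero => simp [hcons]
    | succ k ih =>
      rw [List.replicate_succ, List.cons_append, List.replicate_succ, List.cons_append, hcons,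
        if_neg (not_lt.mpr (mul_self_nonneg a)), add_zero, ← List.cons_append,
        ← List.replicate_succ, ih]
  have hlast : ∀ (k : ℕ) (a : ℝ), signChanges (List.replicate (k + 1) a) = 0 := by
    intro k a
    induction k with
    | zero => simp [signChanges]
    | succ k ih =>
      rw [List.replicate_succ, List.replicate_succ, hcons,
        if_neg (not_lt.mpr (mul_self_nonneg a)), ← List.replicate_succ, ih]
  obtain ⟨m, rfl⟩ := Nat.exists_eq_add_of_le' hm
  obtain ⟨n, rfl⟩ := Nat.exists_eq_add_of_le' hn
  obtain ⟨q, rfl⟩ := Nat.exists_eq_add_of_le' hq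
  have hpat : sigmaPat [m + 1, n + 1, q + 1] = List.replicate (m + 1) (1 : ℝ) ++
      (-1) :: (List.replicate n (-1) ++ 1 :: List.replicate q 1) := by
    simp [sigmaPat, altBlocks, List.replicate_succ]
  rw [hpat, hblock, ← List.cons_append, ← List.replicate_succ, hblock, ← List.replicate_succ, hlast]
  norm_num

lemma irPat_sigmaPat (m n q : ℕ) (hq : 1 ≤ q) :
    irPat (sigmaPat [m, n, q]) = sigmaPat [q, n, m] := by
  obtain ⟨q, rfl⟩ := Nat.exists_eq_add_of_le' hq
  have hlast : (sigmaPat [m, n, q + 1]).getLastD 1 = 1 := by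
    simp [sigmaPat, altBlocks, List.replicate_succ', ← List.append_assoc]
  simp only [irPat, hlast, one_mul, List.map_id']
  simp [sigmaPat, altBlocks]

theorem stmt5 (m n q pos neg : ℕ) (hm : 1 ≤ m) (hn : 1 ≤ n) (hq : 1 ≤ q)
    (hsum : m + n + q = 10)
    (hadm : Admissible (sigmaPat [m, n, q]) pos neg)
    (hexc : ∀ C ∈ [((sigmaPat [1, 8, 1], 0, 3) : Couple),
                   (sigmaPat [1, 8, 1], 0, 5),
                   (sigmaPat [1, 8, 1], 0, 7),
                   (sigmaPat [1, 7, 2], 0, 5),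
                   (sigmaPat [1, 7, 2], 0, 7),
                   (sigmaPat [1, 6, 3], 0, 5),
                   (sigmaPat [1, 6, 3], 0, 7),
                   (sigmaPat [2, 6, 2], 0, 5),
                   (sigmaPat [2, 6, 2], 0, 7),
                   (sigmaPat [1, 5, 4], 0, 7),
                   (sigmaPat [1, 4, 5], 0, 7),
                   (sigmaPat [2, 4, 4], 0, 7),
                   (sigmaPat [2, 5, 3], 0, 7),
                   (sigmaPat [3, 4, 3], 0, 7)],
      ¬ SameOrbit C (sigmaPat [m, n, q], pos, neg)) :
    Realizable (sigmaPat [m, n, q]) pos neg := by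
  have hlen : (sigmaPat [m, n, q]).length = 10 := by
    simp [sigmaPat, altBlocks]
    omega
  obtain ⟨hp, hg, hpe, hge⟩ := hadm
  rw [signChanges_sigmaPat m n q hm hn hq] at hp hg hpe hge
  rw [hlen] at hg hge
  have hpos : pos ∈ [0, 2] := by
    simp only [List.mem_cons, List.not_mem_nil, or_false]
    grind
  have hneg : neg ∈ [1, 3, 5, 7] := by
    simp only [List.mem_cons, List.not_mem_nil, or_false]
    grind
  have hexc' : ∀ e ∈ exceptions,
      ¬ SameOrbit (sigmaPat [e.1.1, e.1.2.1, e.1.2.2], 0, e.2) (sigmaPat [m, n, q], pos, neg) :=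
    fun e he => hexc _ (List.mem_map_of_mem
      (f := fun e : (ℕ × ℕ × ℕ) × ℕ =>
        ((sigmaPat [e.1.1, e.1.2.1, e.1.2.2], 0, e.2) : Couple)) he)
  rcases table_complete m (by omega) n (by omega) q (by omega) ⟨hm, hn, hq, hsum⟩ pos hpos neg
      hneg with
    ⟨rfl, he | he⟩ | ⟨g, hgt, hgs, c, hc, rfl, rfl⟩
  · exact absurd (Or.inl rfl) (hexc' _ he)
  · refine absurd (Or.inr (Or.inr (Or.inl ?_))) (hexc' _ he)
    simp only [irC, irPat_sigmaPat q n m hm]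
  · have := realizable_of_valid g.1 c (fullTable_valid g hgt c hc)
    rwa [hgs] at this
end

section
/- Let P_1 and P_2 be monic real polynomials of degrees d_1 and d_2 with all coefficients nonzero, whose sign patterns are (+, σ_1) and (+, σ_2) respectively, and suppose P_i has exactly pos_i positive real roots and neg_i negative real roots, all simple, its remaining roots nonreal (i = 1, 2). Then: (1) if the last sign of σ_1 is +, for all sufficiently small ε > 0 the polynomial ε^{d_2} P_1(x) P_2(x/ε) has sign pattern (+, σ_1, σ_2) and exactly pos_1 + pos_2 positive and neg_1 + neg_2 negative real roots, all simple, its remaining roots nonreal; (2) if the last sign of σ_1 is −, for all sufficiently small ε > 0 the polynomial ε^{d_2} P_1(x) P_2(x/ε) has sign pattern (+, σ_1, −σ_2) and exactly pos_1 + pos_2 positive and neg_1 + neg_2 negative real roots, all simple, its remaining roots nonreal; here −σ_2 is obtained from σ_2 by changing each + into − and vice versa. -/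
/-!
The polynomial `ε ^ d₂ * P₁(x) * P₂(x / ε)` is `P₁ * P₂.scaleRoots ε`, whose coefficients are
polynomials in `ε`: with `P₁ = ∑ aᵢ xⁱ` and `P₂ = ∑ bⱼ xʲ`, the coefficient of `x ^ k` is
`∑ aᵢ bⱼ ε ^ (d₂ - j)` over `i + j = k`. As `ε → 0⁺` the coefficient of `x ^ (d₂ + k)` tends to
`aₖ` (`eventually_coeff_high`), and that of `x ^ k` with `k ≤ d₂`, divided by `ε ^ (d₂ - k)`, tends
to `a₀ bₖ` (`eventually_coeff_low`). So for small `ε` the first `d₁ + 1` signs are those of `P₁`,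
and the remaining ones are those of `P₂` multiplied by the sign of `a₀`, the last sign of `σ₁`.

The real roots are those of `P₁` together with those of `P₂` multiplied by `ε`. Scaling by `ε > 0`
preserves signs and simplicity, and since `P₁(0) ≠ 0` the scaled roots of `P₂`, which tend to `0`,
avoid the roots of `P₁` once `ε` is small (`eventually_disjoint_roots`).
-/

open Polynomial

open Filter Topology

lemma C_mul_comp_eq_scaleRoots (P : ℝ[X]) {ε : ℝ} (hε : 0 < ε) :
    C (ε ^ P.natDegree) * P.comp (C ε⁻¹ * X) = P.scaleRoots ε := by
  ext j
  rw [coeff_C_mul, comp_C_mul_X_coeff, coeff_scaleRoots]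
  rcases le_or_gt j P.natDegree with h | h
  · rw [pow_sub₀ _ hε.ne' h, inv_pow]
    ring
  · simp [coeff_eq_zero_of_natDegree_lt h]

lemma continuous_coeff_mul_scaleRoots (P Q : ℝ[X]) (k : ℕ) :
    Continuous fun ε : ℝ => (P * Q.scaleRoots ε).coeff k := by
  simp only [coeff_mul, coeff_scaleRoots]
  fun_prop

lemma eventually_coeff_high (P Q : ℝ[X]) (hQ : Q.Monic) {k : ℕ} (hk : P.coeff k ≠ 0) :
    ∀ᶠ ε in 𝓝[>] (0 : ℝ),
      0 < P.coeff k * (P * Q.scaleRoots ε).coeff (k + Q.natDegree) := by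
  have hc := (continuous_const (y := P.coeff k)).mul
    (continuous_coeff_mul_scaleRoots P Q (k + Q.natDegree))
  refine (hc.continuousAt.eventually_const_lt ?_).filter_mono nhdsWithin_le_nhds
  simpa [scaleRoots_zero, hQ.leadingCoeff, coeff_mul_X_pow] using mul_self_pos.mpr hk

/-- The power `ε ^ (Q.natDegree - k)` is the smallest one occurring in the coefficient of `x ^ k`;
factoring it out leaves a continuous function of `ε` with a nonzero value at `0`. -/
lemma coeff_mul_scaleRoots_low (P Q : ℝ[X]) {k : ℕ} (hk : k ≤ Q.natDegree) (ε : ℝ) :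
    (P * Q.scaleRoots ε).coeff k = ε ^ (Q.natDegree - k) *
      ∑ p ∈ Finset.HasAntidiagonal.antidiagonal k, P.coeff p.1 * Q.coeff p.2 * ε ^ p.1 := by
  rw [coeff_mul, Finset.mul_sum]
  refine Finset.sum_congr rfl fun p hp => ?_
  have hp' := Finset.HasAntidiagonal.mem_antidiagonal.mp hp
  rw [coeff_scaleRoots, show Q.natDegree - p.2 = (Q.natDegree - k) + p.1 by omega, pow_add]
  ring

lemma eventually_coeff_low (P Q : ℝ[X]) (hP : P.coeff 0 ≠ 0) {k : ℕ} (hk : k ≤ Q.natDegree)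
    (hQ : Q.coeff k ≠ 0) :
    ∀ᶠ ε in 𝓝[>] (0 : ℝ),
      0 < (P.coeff 0 * Q.coeff k) * (P * Q.scaleRoots ε).coeff k := by
  have hc : Continuous fun ε : ℝ => (P.coeff 0 * Q.coeff k) *
      ∑ p ∈ Finset.HasAntidiagonal.antidiagonal k, P.coeff p.1 * Q.coeff p.2 * ε ^ p.1 := by fun_prop
  have h0 : ∑ p ∈ Finset.HasAntidiagonal.antidiagonal k, P.coeff p.1 * Q.coeff p.2 * (0 : ℝ) ^ p.1 =
      P.coeff 0 * Q.coeff k := by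
    rw [Finset.sum_eq_single (0, k)]
    · simp
    · rintro ⟨i, j⟩ hp hne
      have hij : i + j = k := Finset.HasAntidiagonal.mem_antidiagonal.mp hp
      have hi : i ≠ 0 := by
        rintro rfl
        exact hne (by simp_all)
      simp [hi]
    · simp
  have hlim : ∀ᶠ ε in 𝓝[>] (0 : ℝ), 0 < (P.coeff 0 * Q.coeff k) *
      ∑ p ∈ Finset.HasAntidiagonal.antidiagonal k, P.coeff p.1 * Q.coeff p.2 * ε ^ p.1 := by
    refine (hc.continuousAt.eventually_const_lt ?_).filter_mono nhdsWithin_le_nhds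
    beta_reduce
    rw [h0]
    exact mul_self_pos.mpr (mul_ne_zero hP hQ)
  filter_upwards [hlim, self_mem_nhdsWithin] with ε h hε
  rw [coeff_mul_scaleRoots_low P Q hk, mul_left_comm]
  exact mul_pos (pow_pos hε _) h

lemma eventually_disjoint_roots (P Q : ℝ[X]) (hP : P.coeff 0 ≠ 0) :
    ∀ᶠ ε in 𝓝[>] (0 : ℝ), ∀ r ∈ P.roots, ∀ s ∈ Q.roots, r ≠ ε * s := by
  have key : ∀ᶠ ε in 𝓝[>] (0 : ℝ),
      ∀ r ∈ P.roots.toFinset, ∀ s ∈ Q.roots.toFinset, r ≠ ε * s := by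
    refine (Finset.eventually_all _).2 fun r hr => (Finset.eventually_all _).2 fun s _ => ?_
    have hr0 : r ≠ 0 := by
      rintro rfl
      apply hP
      rw [coeff_zero_eq_eval_zero]
      exact isRoot_of_mem_roots (Multiset.mem_toFinset.mp hr)
    have hc : Continuous fun ε : ℝ => ε * s := by fun_prop
    have h := hc.continuousAt.eventually_ne (x := 0) (y := r) (by simpa using hr0.symm)
    exact (h.mono fun _ => Ne.symm).filter_mono nhdsWithin_le_nhds
  filter_upwards [key] with ε h r hr s hs
  exact h r (Multiset.mem_toFinset.mpr hr) s (Multiset.mem_toFinset.mpr hs)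

lemma rootData_mul_scaleRoots {P Q : ℝ[X]} {p n p' n' : ℕ} (hP : P.Monic) (hQ : Q.Monic)
    (hrP : RootData P p n) (hrQ : RootData Q p' n') {ε : ℝ} (hε : 0 < ε)
    (hdis : ∀ r ∈ P.roots, ∀ s ∈ Q.roots, r ≠ ε * s) :
    RootData (P * Q.scaleRoots ε) (p + p') (n + n') := by
  obtain ⟨hp, hn, hnd⟩ := hrP
  obtain ⟨hp', hn', hnd'⟩ := hrQ
  have hroots : (P * Q.scaleRoots ε).roots = P.roots + Q.roots.map (ε * ·) := by
    rw [roots_mul (mul_ne_zero hP.ne_zero (scaleRoots_ne_zero hQ.ne_zero ε)),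
      roots_scaleRoots Q hε.ne'.isUnit]
  refine ⟨?_, ?_, ?_⟩
  · rw [hroots, Multiset.countP_add, hp, Multiset.countP_map, ← Multiset.countP_eq_card_filter]
    simp only [mul_pos_iff_of_pos_left hε, hp']
  · rw [hroots, Multiset.countP_add, hn, Multiset.countP_map, ← Multiset.countP_eq_card_filter]
    simp only [mul_neg_iff, hε, hε.not_gt, true_and, false_and, or_false, hn']
  · rw [hroots, Multiset.nodup_add]
    refine ⟨hnd, hnd'.map (mul_right_injective₀ hε.ne'), ?_⟩
    rw [Multiset.disjoint_left]
    intro r hr hr'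
    obtain ⟨s, hs, rfl⟩ := Multiset.mem_map.mp hr'
    exact hdis _ hr s hs rfl

lemma HasSignPattern.coeff_ne_zero {Q : ℝ[X]} {σ : List ℝ} (h : HasSignPattern Q σ) {k : ℕ}
    (hk : k ≤ Q.natDegree) : Q.coeff k ≠ 0 := by
  have hpos := h.2 ⟨Q.natDegree - k, by have := h.1; omega⟩
  simp only [Nat.sub_sub_self hk] at hpos
  exact right_ne_zero_of_mul (ne_of_gt hpos)

/-- The sign `τ` stands for the last sign of `σ₁`; both cases of the concatenation are covered
by multiplying every entry of `σ₂` by `τ`. -/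
lemma hasSignPattern_mul_scaleRoots {P Q : ℝ[X]} {σ₁ σ₂ : List ℝ} (hP : P.Monic) (hQ : Q.Monic)
    (hs₁ : HasSignPattern P (1 :: σ₁)) (hs₂ : HasSignPattern Q (1 :: σ₂)) {τ ε : ℝ}
    (hτ : 0 < τ * P.coeff 0)
    (hhigh : ∀ k ≤ P.natDegree, 0 < P.coeff k * (P * Q.scaleRoots ε).coeff (k + Q.natDegree))
    (hlow : ∀ k ≤ Q.natDegree,
      0 < (P.coeff 0 * Q.coeff k) * (P * Q.scaleRoots ε).coeff k) :
    HasSignPattern (P * Q.scaleRoots ε) (1 :: (σ₁ ++ σ₂.map (τ * ·))) := by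
  obtain ⟨hl₁, hc₁⟩ := hs₁
  obtain ⟨hl₂, hc₂⟩ := hs₂
  have hdeg : (P * Q.scaleRoots ε).natDegree = P.natDegree + Q.natDegree := by
    rw [hP.natDegree_mul ((monic_scaleRoots_iff ε).mpr hQ), natDegree_scaleRoots]
  simp only [List.length_cons, Nat.add_right_cancel_iff] at hl₁ hl₂
  refine ⟨by simp [hdeg, hl₁, hl₂], ?_⟩
  rintro ⟨i, hi⟩
  simp only [List.length_cons, List.length_append, List.length_map] at hi
  rw [hdeg]
  simp only [List.get_eq_getElem]
  rcases le_or_gt i P.natDegree with h | h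
  · have h1 := hc₁ ⟨i, by simp; omega⟩
    have h2 := hhigh (P.natDegree - i) (by omega)
    simp only [List.get_eq_getElem] at h1
    have he : (1 :: (σ₁ ++ σ₂.map (τ * ·)))[i]'(by simp; omega) =
        (1 :: σ₁)[i]'(by simp; omega) := by
      simp only [← List.cons_append]
      exact List.getElem_append_left _
    rw [he, show P.natDegree + Q.natDegree - i = P.natDegree - i + Q.natDegree by omega]
    -- both factors have the sign of `P.coeff (P.natDegree - i)`
    refine pos_of_mul_pos_left (b := P.coeff (P.natDegree - i) ^ 2) ?_ (sq_nonneg _)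
    linarith [mul_pos h1 h2]
  · obtain ⟨j, rfl⟩ : ∃ j, i = σ₁.length + j + 1 := ⟨i - σ₁.length - 1, by omega⟩
    have hj : j < σ₂.length := by omega
    have h1 := hc₂ ⟨j + 1, by simp; omega⟩
    have h2 := hlow (Q.natDegree - (j + 1)) (by omega)
    simp only [List.get_eq_getElem, List.getElem_cons_succ] at h1
    have he : (1 :: (σ₁ ++ σ₂.map (τ * ·)))[σ₁.length + j + 1]'(by simp; omega) = τ * σ₂[j] := by
      simp
    rw [he, show P.natDegree + Q.natDegree - (σ₁.length + j + 1) = Q.natDegree - (j + 1) by omega]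
    refine pos_of_mul_pos_left
      (b := (P.coeff 0 * Q.coeff (Q.natDegree - (j + 1))) ^ 2) ?_ (sq_nonneg _)
    linarith [mul_pos (mul_pos h1 hτ) h2]

lemma HasSignPattern.getLast_mul_coeff_zero_pos {P : ℝ[X]} {σ : List ℝ}
    (hs : HasSignPattern P (1 :: σ)) {τ : ℝ} (h : σ.getLast? = some τ) :
    0 < τ * P.coeff 0 := by
  obtain ⟨hl, hc⟩ := hs
  simp only [List.length_cons, Nat.add_right_cancel_iff] at hl
  obtain ⟨l, rfl⟩ := List.getLast?_eq_some_iff.mp h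
  have h1 := hc ⟨l.length + 1, by simp⟩
  simpa [hl] using h1

/-- Concatenation lemma: for monic `P₁`, `P₂` with sign patterns `(+, σ₁)`, `(+, σ₂)`
realizing `(pos₁, neg₁)` and `(pos₂, neg₂)`, for all small `ε > 0` the polynomial
`ε^{d₂} P₁(x) P₂(x/ε)` realizes `(+, σ₁, σ₂)` (resp. `(+, σ₁, -σ₂)`) with the pair
`(pos₁ + pos₂, neg₁ + neg₂)` if the last sign of `σ₁` is `+` (resp. `-`). -/
theorem stmt7 (d₁ d₂ pos₁ neg₁ pos₂ neg₂ : ℕ) (P₁ P₂ : Polynomial ℝ) (σ₁ σ₂ : List ℝ)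
    (hm₁ : P₁.Monic) (hm₂ : P₂.Monic) (hd₁ : P₁.natDegree = d₁) (hd₂ : P₂.natDegree = d₂)
    (hs₁ : HasSignPattern P₁ (1 :: σ₁)) (hs₂ : HasSignPattern P₂ (1 :: σ₂))
    (hr₁ : RootData P₁ pos₁ neg₁) (hr₂ : RootData P₂ pos₂ neg₂) :
    ∃ ε₀ > (0 : ℝ), ∀ ε : ℝ, 0 < ε → ε < ε₀ →
      (σ₁.getLast? = some 1 →
        HasSignPattern
          (Polynomial.C (ε ^ d₂) * P₁ * P₂.comp (Polynomial.C ε⁻¹ * Polynomial.X))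
          (1 :: (σ₁ ++ σ₂)) ∧
        RootData
          (Polynomial.C (ε ^ d₂) * P₁ * P₂.comp (Polynomial.C ε⁻¹ * Polynomial.X))
          (pos₁ + pos₂) (neg₁ + neg₂)) ∧
      (σ₁.getLast? = some (-1) →
        HasSignPattern
          (Polynomial.C (ε ^ d₂) * P₁ * P₂.comp (Polynomial.C ε⁻¹ * Polynomial.X))
          (1 :: (σ₁ ++ σ₂.map (fun s => -s))) ∧
        RootData
          (Polynomial.C (ε ^ d₂) * P₁ * P₂.comp (Polynomial.C ε⁻¹ * Polynomial.X))
          (pos₁ + pos₂) (neg₁ + neg₂)) := by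
  subst hd₁ hd₂
  have hP0 : P₁.coeff 0 ≠ 0 := hs₁.coeff_ne_zero (Nat.zero_le _)
  have hhigh : ∀ᶠ ε in 𝓝[>] (0 : ℝ), ∀ k ∈ Finset.Iic P₁.natDegree,
      0 < P₁.coeff k * (P₁ * P₂.scaleRoots ε).coeff (k + P₂.natDegree) :=
    (Finset.eventually_all _).2 fun k hk =>
      eventually_coeff_high P₁ P₂ hm₂ (hs₁.coeff_ne_zero (Finset.mem_Iic.mp hk))
  have hlow : ∀ᶠ ε in 𝓝[>] (0 : ℝ), ∀ k ∈ Finset.Iic P₂.natDegree,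
      0 < (P₁.coeff 0 * P₂.coeff k) * (P₁ * P₂.scaleRoots ε).coeff k :=
    (Finset.eventually_all _).2 fun k hk =>
      eventually_coeff_low P₁ P₂ hP0 (Finset.mem_Iic.mp hk)
        (hs₂.coeff_ne_zero (Finset.mem_Iic.mp hk))
  obtain ⟨ε₀, hε₀, hsub⟩ := mem_nhdsGT_iff_exists_Ioo_subset.mp
    (hhigh.and (hlow.and (eventually_disjoint_roots P₁ P₂ hP0)))
  refine ⟨ε₀, hε₀, fun ε hε hlt => ?_⟩
  obtain ⟨h1, h2, h3⟩ := hsub ⟨hε, hlt⟩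
  simp only [Finset.mem_Iic] at h1 h2
  have hF : C (ε ^ P₂.natDegree) * P₁ * P₂.comp (C ε⁻¹ * X) = P₁ * P₂.scaleRoots ε := by
    rw [← C_mul_comp_eq_scaleRoots P₂ hε]
    ring
  rw [hF]
  have hroot := rootData_mul_scaleRoots hm₁ hm₂ hr₁ hr₂ hε h3
  refine ⟨fun hlast => ⟨?_, hroot⟩, fun hlast => ⟨?_, hroot⟩⟩
  · simpa using hasSignPattern_mul_scaleRoots hm₁ hm₂ hs₁ hs₂
      (hs₁.getLast_mul_coeff_zero_pos hlast) h1 h2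
  · simpa using hasSignPattern_mul_scaleRoots hm₁ hm₂ hs₁ hs₂
      (hs₁.getLast_mul_coeff_zero_pos hlast) h1 h2
end

section
/- Let m ≥ 7 be an integer and x_1, …, x_m be positive reals with x_1 ≤ 1 and e_1 := x_1 + ⋯ + x_m ≥ 23 + 4√30. Then E_1 > 1 + 4/(e_1 − 1), where E_1 := 1/x_1 + ⋯ + 1/x_m. Equivalently, e_m(e_1 + 3) < e_{m−1}(e_1 − 1), where e_m = x_1⋯x_m and e_{m−1} = e_m·E_1. -/
/-!
Since `x₁ ≤ 1`, the first reciprocal contributes at least `1`. By Cauchy–Schwarz the other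
`m - 1 ≥ 6` reciprocals sum to at least `(m - 1)² / T ≥ 36 / T`, where `T = e₁ - x₁ < e₁`, and
`36 / e₁ > 4 / (e₁ - 1)` because `e₁` is large. The product form follows by multiplying through
by the positive quantity `e_m (e₁ - 1)`.
-/

/-- For `m ≥ 7` positive reals with `x₁ ≤ 1` and sum `e₁ ≥ 23 + 4√30`, one has
`E₁ > 1 + 4/(e₁ - 1)` (with `E₁` the sum of the reciprocals); equivalently,
`e_m (e₁ + 3) < e_{m-1} (e₁ - 1)` where `e_m` is the product and `e_{m-1} = e_m · E₁`. -/
theorem stmt9 (m : ℕ) (hm : 7 ≤ m) (x : Fin m → ℝ) (hx : ∀ i, 0 < x i)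
    (hx₁ : x ⟨0, by omega⟩ ≤ 1)
    (h₁ : 23 + 4 * Real.sqrt 30 ≤ ∑ i, x i) :
    (∑ i, (x i)⁻¹) > 1 + 4 / ((∑ i, x i) - 1) ∧
    (∏ i, x i) * ((∑ i, x i) + 3) <
      ((∏ i, x i) * ∑ i, (x i)⁻¹) * ((∑ i, x i) - 1) := by
  obtain ⟨n, rfl⟩ : ∃ n, m = n + 1 := ⟨m - 1, by omega⟩
  have hS : 23 ≤ ∑ i, x i := by linarith [Real.sqrt_nonneg 30]
  have hsum : ∑ i, x i = x 0 + ∑ i : Fin n, x i.succ := Fin.sum_univ_succ x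
  have hinv : ∑ i, (x i)⁻¹ = (x 0)⁻¹ + ∑ i : Fin n, (x i.succ)⁻¹ := Fin.sum_univ_succ _
  have h0 : 0 < x 0 := hx 0
  have h0' : x 0 ≤ 1 := hx₁
  have h0inv : 1 ≤ (x 0)⁻¹ := (one_le_inv₀ h0).2 h0'
  have hcs := Finset.sum_sq_le_sum_mul_sum_of_sq_le_mul (Finset.univ : Finset (Fin n))
    (r := fun _ => (1 : ℝ)) (f := fun i => (x i.succ)⁻¹) (g := fun i => x i.succ)
    (fun i _ => (inv_pos.2 (hx _)).le) (fun i _ => (hx _).le)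
    (fun i _ => by rw [inv_mul_cancel₀ (hx _).ne', one_pow])
  simp only [Finset.sum_const, Finset.card_univ, Fintype.card_fin, nsmul_eq_mul, mul_one] at hcs
  have hn : (6 : ℝ) ≤ n := by exact_mod_cast (by omega : 6 ≤ n)
  have hP : 0 < ∏ i, x i := Finset.prod_pos fun i _ => hx i
  set S := ∑ i, x i
  set T := ∑ i : Fin n, x i.succ
  set R := ∑ i : Fin n, (x i.succ)⁻¹
  have hT : 0 < T := by linarith
  have hR : 36 / T ≤ R := by
    rw [div_le_iff₀ hT]
    nlinarith
  have hTS : 4 / (S - 1) < 36 / T := by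
    rw [div_lt_div_iff₀ (by linarith) hT]
    linarith
  have hmain : 1 + 4 / (S - 1) < ∑ i, (x i)⁻¹ := by linarith
  refine ⟨hmain, ?_⟩
  have hS1 : 0 < S - 1 := by linarith
  have hcleared : S + 3 < (∑ i, (x i)⁻¹) * (S - 1) := by
    have h := mul_lt_mul_of_pos_right hmain hS1
    rw [add_mul, div_mul_cancel₀ _ hS1.ne'] at h
    linarith
  rw [mul_assoc]
  exact mul_lt_mul_of_pos_left hcleared hP
end

section
/- Let m ≥ 7 be an integer and x_1, …, x_m be reals with x_ν ≥ 1 for all ν, and let e_k denote the k-th elementary symmetric function of x_1, …, x_m. Then Ψ := 4(e_3 − e_2)(e_1 − 1) − 4(e_4 − e_3) − (e_1 − 1)²(e_2 − e_1) satisfies Ψ ≤ −(m+1)m(m−1)/2 < 0, the maximal value −(m+1)m(m−1)/2 being attained exactly when x_1 = ⋯ = x_m = 1. Moreover e_2 − e_1 > 0 and e_3 − e_2 > 0. -/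
/-!
Write `x = 1 + y` with `y ≥ 0`, and let `a, b, c, d` be the first four elementary symmetric
functions of `y`. Expanding `e₁, …, e₄` in terms of `a, b, c, d` (`esymOn_one_add`) gives

  `Ψ = -(m+1)m(m-1)/2 - 2(m²-1) a - [(m²+5m-8)/2 · a² - (m²-9) b]`
  `    - [(m-2) a³ - 2(m-5) ab - 12 c] - [a² b - 4 ac + 4 d]`.

The brackets are the homogeneous parts of degree 2, 3 and 4 in `y`, and each is nonnegative:
the first two because `2b ≤ a²` and `3c ≤ ab`, the last because it is
`∑ yᵢ³ yⱼ + 2 ∑ yᵢ² yⱼ² + ∑ yᵢ² yⱼ yₖ` (`esymOn_inequalities`). Hence `Ψ` is at most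
`-(m+1)m(m-1)/2 - 2(m²-1) a`, and equality in the theorem forces `a = ∑ yᵢ = 0`, that is `y = 0`.
-/

/-- The `k`-th elementary symmetric function of `x₁, …, x_m`. -/
noncomputable def esym (m k : ℕ) (x : Fin m → ℝ) : ℝ :=
  ∑ s ∈ Finset.powersetCard k (Finset.univ : Finset (Fin m)), ∏ i ∈ s, x i

/-- The `k`-th elementary symmetric function of the values of `y` on the finite set `s`;
`esym m k` is the case `s = Finset.univ`. A variable `s` allows induction on the set of variables. -/
noncomputable def esymOn {ι : Type*} (y : ι → ℝ) (s : Finset ι) (k : ℕ) : ℝ :=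
  ∑ t ∈ s.powersetCard k, ∏ i ∈ t, y i

lemma esymOn_zero {ι : Type*} (y : ι → ℝ) (s : Finset ι) : esymOn y s 0 = 1 := by
  simp [esymOn]

lemma esymOn_one {ι : Type*} (y : ι → ℝ) (s : Finset ι) : esymOn y s 1 = ∑ i ∈ s, y i := by
  simp [esymOn, Finset.powersetCard_one]

lemma esymOn_empty_succ {ι : Type*} (y : ι → ℝ) (k : ℕ) : esymOn y ∅ (k + 1) = 0 := by
  rw [esymOn, Finset.powersetCard_eq_empty.2 (by simp), Finset.sum_empty]

lemma esymOn_insert {ι : Type*} [DecidableEq ι] (y : ι → ℝ) {s : Finset ι} {j : ι} (hj : j ∉ s)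
    (k : ℕ) :
    esymOn y (insert j s) (k + 1) = esymOn y s (k + 1) + y j * esymOn y s k := by
  have hmem : ∀ t ∈ s.powersetCard k, j ∉ t := fun t ht h =>
    hj ((Finset.mem_powersetCard.1 ht).1 h)
  unfold esymOn
  rw [Finset.powersetCard_succ_insert hj, Finset.sum_union, Finset.sum_image, Finset.mul_sum]
  · congr 1
    exact Finset.sum_congr rfl fun t ht => Finset.prod_insert (hmem t ht)
  · intro t ht u hu h
    rw [← Finset.erase_insert (hmem t ht), ← Finset.erase_insert (hmem u hu), h]
  · rw [Finset.disjoint_left]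
    intro t ht ht'
    obtain ⟨u, -, rfl⟩ := Finset.mem_image.1 ht'
    exact hj ((Finset.mem_powersetCard.1 ht).1 (Finset.mem_insert_self j u))

/-- The case `k ≤ 4` of `e_k(1 + y) = ∑ⱼ (n - j).choose (k - j) · e_j(y)`, where `n` is the number
of variables; the binomial coefficients are written as polynomials in the real number `n`. -/
lemma esymOn_one_add {ι : Type*} (x y : ι → ℝ) (hxy : ∀ i, x i = 1 + y i) (s : Finset ι) :
    esymOn x s 1 = s.card + esymOn y s 1 ∧
    esymOn x s 2 = s.card * (s.card - 1) / 2 + (s.card - 1) * esymOn y s 1 + esymOn y s 2 ∧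
    esymOn x s 3 = s.card * (s.card - 1) * (s.card - 2) / 6
      + (s.card - 1) * (s.card - 2) / 2 * esymOn y s 1 + (s.card - 2) * esymOn y s 2
      + esymOn y s 3 ∧
    esymOn x s 4 = s.card * (s.card - 1) * (s.card - 2) * (s.card - 3) / 24
      + (s.card - 1) * (s.card - 2) * (s.card - 3) / 6 * esymOn y s 1
      + (s.card - 2) * (s.card - 3) / 2 * esymOn y s 2 + (s.card - 3) * esymOn y s 3
      + esymOn y s 4 := by
  classical
  induction s using Finset.induction_on with
  | empty => simp [esymOn_empty_succ _ 0, esymOn_empty_succ _ 1, esymOn_empty_succ _ 2,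
      esymOn_empty_succ _ 3]
  | insert j s hj ih =>
    obtain ⟨h1, h2, h3, h4⟩ := ih
    simp only [Finset.card_insert_of_notMem hj, esymOn_insert _ hj 0, esymOn_insert _ hj 1,
      esymOn_insert _ hj 2, esymOn_insert _ hj 3, esymOn_zero, zero_add, Nat.reduceAdd, h1, h2, h3,
      h4, hxy j]
    push_cast
    refine ⟨?_, ?_, ?_, ?_⟩ <;> ring

/-- With `a, b, c, d` the first four elementary symmetric functions of nonnegative variables, adding
a variable `t` changes `a² - 2b`, `ab - 3c`, `ac - 4d` and `a²b - 4ac + 4d` by `t²`,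
`t(a² - 2b) + t² a`, `t(ab - 3c) + t² b` and `t a(a² - 2b) + t²(2a² - 3b) + t³ a` respectively, so
all four stay nonnegative. -/
lemma esymOn_inequalities {ι : Type*} (y : ι → ℝ) (hy : ∀ i, 0 ≤ y i) (s : Finset ι) :
    2 * esymOn y s 2 ≤ esymOn y s 1 ^ 2 ∧
    3 * esymOn y s 3 ≤ esymOn y s 1 * esymOn y s 2 ∧
    4 * esymOn y s 4 ≤ esymOn y s 1 * esymOn y s 3 ∧
    0 ≤ esymOn y s 1 ^ 2 * esymOn y s 2 - 4 * esymOn y s 1 * esymOn y s 3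
      + 4 * esymOn y s 4 := by
  classical
  induction s using Finset.induction_on with
  | empty => simp [esymOn_empty_succ _ 0, esymOn_empty_succ _ 1, esymOn_empty_succ _ 2,
      esymOn_empty_succ _ 3]
  | insert j s hj ih =>
    have ha : 0 ≤ esymOn y s 1 := Finset.sum_nonneg fun t _ => Finset.prod_nonneg fun i _ => hy i
    have hb : 0 ≤ esymOn y s 2 := Finset.sum_nonneg fun t _ => Finset.prod_nonneg fun i _ => hy i
    have ht := hy j
    obtain ⟨h1, h2, h4, h3⟩ := ih
    simp only [esymOn_insert _ hj 0, esymOn_insert _ hj 1,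
      esymOn_insert _ hj 2, esymOn_insert _ hj 3, esymOn_zero, zero_add, Nat.reduceAdd]
    generalize esymOn y s 1 = a at *
    generalize esymOn y s 2 = b at *
    generalize esymOn y s 3 = c at *
    generalize esymOn y s 4 = d at *
    generalize y j = t at *
    have hab : 0 ≤ a ^ 2 - 2 * b := by linarith
    have hab' : 0 ≤ 2 * a ^ 2 - 3 * b := by linarith [sq_nonneg a]
    have habc : 0 ≤ a * b - 3 * c := by linarith
    refine ⟨?_, ?_, ?_, ?_⟩
    · linarith [sq_nonneg t]
    · have p1 : 0 ≤ t * (a ^ 2 - 2 * b) := by positivity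
      have p2 : 0 ≤ t ^ 2 * a := by positivity
      linarith
    · have p1 : 0 ≤ t * (a * b - 3 * c) := by positivity
      have p2 : 0 ≤ t ^ 2 * b := by positivity
      linarith
    · have p1 : 0 ≤ t * a * (a ^ 2 - 2 * b) := by positivity
      have p2 : 0 ≤ t ^ 2 * (2 * a ^ 2 - 3 * b) := by positivity
      have p3 : 0 ≤ t ^ 3 * a := by positivity
      linarith

/-- For `m ≥ 7` reals `x_ν ≥ 1`, the quantity
`Ψ = 4(e₃ - e₂)(e₁ - 1) - 4(e₄ - e₃) - (e₁ - 1)²(e₂ - e₁)` satisfies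
`Ψ ≤ -(m+1)m(m-1)/2 < 0`, with equality exactly when all `x_ν = 1`;
moreover `e₂ - e₁ > 0` and `e₃ - e₂ > 0`. -/
theorem stmt10 (m : ℕ) (hm : 7 ≤ m) (x : Fin m → ℝ) (hx : ∀ ν, 1 ≤ x ν) :
    (4 * (esym m 3 x - esym m 2 x) * (esym m 1 x - 1) - 4 * (esym m 4 x - esym m 3 x)
        - (esym m 1 x - 1) ^ 2 * (esym m 2 x - esym m 1 x)
      ≤ -(((m + 1) * m * (m - 1) : ℕ) : ℝ) / 2) ∧
    (-((((m + 1) * m * (m - 1) : ℕ)) : ℝ) / 2 < 0) ∧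
    (4 * (esym m 3 x - esym m 2 x) * (esym m 1 x - 1) - 4 * (esym m 4 x - esym m 3 x)
        - (esym m 1 x - 1) ^ 2 * (esym m 2 x - esym m 1 x)
      = -(((m + 1) * m * (m - 1) : ℕ) : ℝ) / 2 ↔ ∀ ν, x ν = 1) ∧
    esym m 1 x < esym m 2 x ∧ esym m 2 x < esym m 3 x := by
  obtain ⟨y, hxy⟩ : ∃ y : Fin m → ℝ, ∀ i, x i = 1 + y i := ⟨fun i => x i - 1, fun i => by ring⟩
  have hy : ∀ i, 0 ≤ y i := fun i => by linarith [hx i, hxy i]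
  have hnn : ∀ k, 0 ≤ esymOn y Finset.univ k := fun k =>
    Finset.sum_nonneg fun t _ => Finset.prod_nonneg fun i _ => hy i
  have hiff : (∀ ν, x ν = 1) ↔ esymOn y Finset.univ 1 = 0 := by
    rw [esymOn_one, Finset.sum_eq_zero_iff_of_nonneg fun i _ => hy i]
    simp [hxy]
  obtain ⟨e1, e2, e3, e4⟩ := esymOn_one_add x y hxy Finset.univ
  obtain ⟨h1, h2, h4, h3⟩ := esymOn_inequalities y hy Finset.univ
  have ha := hnn 1
  have hb := hnn 2
  have hc := hnn 3
  have hd := hnn 4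
  have hcast : (((m + 1) * m * (m - 1) : ℕ) : ℝ) = ((m : ℝ) + 1) * m * (m - 1) := by
    push_cast [Nat.cast_sub (show 1 ≤ m by omega)]
    ring
  have hm' : (7 : ℝ) ≤ m := by exact_mod_cast hm
  rw [Finset.card_univ, Fintype.card_fin] at e1 e2 e3 e4
  rw [hcast, hiff]
  change esym m 1 x = _ at e1
  change esym m 2 x = _ at e2
  change esym m 3 x = _ at e3
  change esym m 4 x = _ at e4
  rw [e1, e2, e3, e4]
  generalize esymOn y Finset.univ 1 = a at *
  generalize esymOn y Finset.univ 2 = b at *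
  generalize esymOn y Finset.univ 3 = c at *
  generalize esymOn y Finset.univ 4 = d at *
  obtain ⟨n, hn, hmn⟩ : ∃ n : ℝ, 0 ≤ n ∧ (m : ℝ) = n + 7 := ⟨m - 7, by linarith, by ring⟩
  rw [hmn]
  have hab : 0 ≤ a ^ 2 - 2 * b := by linarith
  have deg2 : 0 ≤ ((n + 7) ^ 2 + 5 * (n + 7) - 8) / 2 * a ^ 2 - ((n + 7) ^ 2 - 9) * b := by
    have p1 : 0 ≤ (n ^ 2 + 14 * n + 40) / 2 * (a ^ 2 - 2 * b) := by positivity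
    have p2 : 0 ≤ (5 * n + 36) / 2 * a ^ 2 := by positivity
    linarith
  have deg3 : 0 ≤ (n + 5) * a ^ 3 - 2 * (n + 2) * (a * b) - 12 * c := by
    have p1 : 0 ≤ (n + 4) * a * (a ^ 2 - 2 * b) := by positivity
    have p2 : 0 ≤ a ^ 3 := by positivity
    linarith
  have key : 4 * ((n + 7) * (n + 7 - 1) * (n + 7 - 2) / 6
        + (n + 7 - 1) * (n + 7 - 2) / 2 * a + (n + 7 - 2) * b + c
        - ((n + 7) * (n + 7 - 1) / 2 + (n + 7 - 1) * a + b)) * (n + 7 + a - 1)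
      - 4 * ((n + 7) * (n + 7 - 1) * (n + 7 - 2) * (n + 7 - 3) / 24
        + (n + 7 - 1) * (n + 7 - 2) * (n + 7 - 3) / 6 * a + (n + 7 - 2) * (n + 7 - 3) / 2 * b
        + (n + 7 - 3) * c + d - ((n + 7) * (n + 7 - 1) * (n + 7 - 2) / 6
        + (n + 7 - 1) * (n + 7 - 2) / 2 * a + (n + 7 - 2) * b + c))
      - (n + 7 + a - 1) ^ 2 * ((n + 7) * (n + 7 - 1) / 2 + (n + 7 - 1) * a + b - (n + 7 + a))
      = -((n + 7 + 1) * (n + 7) * (n + 7 - 1)) / 2 - 2 * ((n + 7) ^ 2 - 1) * a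
        - (((n + 7) ^ 2 + 5 * (n + 7) - 8) / 2 * a ^ 2 - ((n + 7) ^ 2 - 9) * b)
        - ((n + 5) * a ^ 3 - 2 * (n + 2) * (a * b) - 12 * c)
        - (a ^ 2 * b - 4 * a * c + 4 * d) := by
    ring
  have lin : 96 * a ≤ 2 * ((n + 7) ^ 2 - 1) * a := by
    have p : 0 ≤ (2 * n ^ 2 + 28 * n) * a := by positivity
    linarith
  rw [key]
  refine ⟨by linarith, ?_, ⟨fun h => by linarith, fun h => ?_⟩, ?_, ?_⟩
  · have p : 0 < (n + 8) * (n + 7) * (n + 6) := by positivity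
    linarith
  · subst h
    have b0 : b = 0 := by linarith
    have c0 : c = 0 := by linarith
    have d0 : d = 0 := by linarith
    subst b0 c0 d0
    ring
  · have p1 : 0 < n ^ 2 / 2 + 11 * n / 2 + 14 := by positivity
    have p2 : 0 ≤ (n + 5) * a := by positivity
    linarith
  · have p1 : 0 < (n + 7) * (n + 6) * (n + 2) / 6 := by positivity
    have p2 : 0 ≤ (n + 6) * (n + 3) / 2 * a := by positivity
    have p3 : 0 ≤ (n + 4) * b := by positivity
    linarith
end

section
/- Let m ≥ 4 and x_1, …, x_m be real variables, let e_k denote the k-th elementary symmetric polynomial of x_1, …, x_m and f_k the k-th elementary symmetric polynomial of x_2, …, x_m (with e_0 = f_0 = 1). Set Ψ := e_1³ − e_1² e_2 − 2 e_1² − 2 e_1 e_2 + 4 e_1 e_3 + e_1 + 3 e_2 − 4 e_4, which equals 4(e_3 − e_2)(e_1 − 1) − 4(e_4 − e_3) − (e_1 − 1)²(e_2 − e_1). Then the partial derivative of Ψ with respect to x_1 factors as ∂Ψ/∂x_1 = −(f_1 + 3x_1 − 1)·(x_1(f_1 − 1) + f_1² − 2 f_2 + 1). -/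
/-- The `k`-th elementary symmetric function of `x₂, …, x_m`
(the variables other than the one of index `i₀`). -/
noncomputable def fsym (m k : ℕ) (i₀ : Fin m) (x : Fin m → ℝ) : ℝ :=
  ∑ s ∈ Finset.powersetCard k ((Finset.univ : Finset (Fin m)).erase i₀), ∏ i ∈ s, x i

/-- The quantity `Ψ = e₁³ - e₁²e₂ - 2e₁² - 2e₁e₂ + 4e₁e₃ + e₁ + 3e₂ - 4e₄`. -/
noncomputable def Psi (m : ℕ) (y : Fin m → ℝ) : ℝ :=
  esym m 1 y ^ 3 - esym m 1 y ^ 2 * esym m 2 y - 2 * esym m 1 y ^ 2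
    - 2 * esym m 1 y * esym m 2 y + 4 * esym m 1 y * esym m 3 y + esym m 1 y
    + 3 * esym m 2 y - 4 * esym m 4 y

theorem esym_update (m k : ℕ) (i₀ : Fin m) (x : Fin m → ℝ) (t : ℝ) :
    esym m (k + 1) (Function.update x i₀ t) = fsym m (k + 1) i₀ x + t * fsym m k i₀ x := by
  have hnotMem : ∀ j, ∀ s ∈ Finset.powersetCard j ((Finset.univ : Finset (Fin m)).erase i₀),
      i₀ ∉ s := by
    intro j s hs h
    exact Finset.notMem_erase i₀ _ ((Finset.mem_powersetCard.1 hs).1 h)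
  have hupd : ∀ s : Finset (Fin m), i₀ ∉ s →
      ∏ i ∈ s, Function.update x i₀ t i = ∏ i ∈ s, x i := by
    intro s hs
    refine Finset.prod_congr rfl fun i hi => Function.update_of_ne ?_ _ _
    rintro rfl
    exact hs hi
  unfold esym fsym
  conv_lhs => rw [← Finset.insert_erase (Finset.mem_univ i₀)]
  rw [Finset.powersetCard_succ_insert (Finset.notMem_erase i₀ _), Finset.sum_union,
    Finset.sum_image, Finset.mul_sum]
  · congr 1
    · exact Finset.sum_congr rfl fun s hs => hupd s (hnotMem _ s hs)
    · refine Finset.sum_congr rfl fun s hs => ?_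
      rw [Finset.prod_insert (hnotMem _ s hs), hupd s (hnotMem _ s hs), Function.update_self]
  · intro s hs u hu h
    rw [← Finset.erase_insert (hnotMem _ s hs), ← Finset.erase_insert (hnotMem _ u hu)]
    exact congrArg (fun v => v.erase i₀) h
  · rw [Finset.disjoint_left]
    intro s hs h
    obtain ⟨u, -, rfl⟩ := Finset.mem_image.1 h
    exact hnotMem _ _ hs (Finset.mem_insert_self _ _)

theorem fsym_zero (m : ℕ) (i₀ : Fin m) (x : Fin m → ℝ) : fsym m 0 i₀ x = 1 := by
  simp [fsym]

/-- Stated for an arbitrary variable `x i₀`, since `Ψ` is symmetric. The derivative is asserted to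
exist. -/
theorem hasDerivAt_Psi_update (m : ℕ) (i₀ : Fin m) (x : Fin m → ℝ) :
    HasDerivAt (fun t : ℝ => Psi m (Function.update x i₀ t))
      (-(fsym m 1 i₀ x + 3 * x i₀ - 1) *
        (x i₀ * (fsym m 1 i₀ x - 1) + fsym m 1 i₀ x ^ 2 - 2 * fsym m 2 i₀ x + 1)) (x i₀) := by
  have he : ∀ k, HasDerivAt (fun t : ℝ => esym m (k + 1) (Function.update x i₀ t))
      (fsym m k i₀ x) (x i₀) := by
    intro k
    simp only [esym_update]
    simpa using ((hasDerivAt_id (x i₀)).mul_const (fsym m k i₀ x)).const_add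
      (fsym m (k + 1) i₀ x)
  have h1 := he 0
  have h2 := he 1
  have h3 := he 2
  have h4 := he 3
  have h := ((((((((h1.pow 3).sub ((h1.pow 2).mul h2)).sub ((h1.pow 2).const_mul 2)).sub
    ((h1.const_mul 2).mul h2)).add ((h1.const_mul 4).mul h3)).add h1).add
    (h2.const_mul 3)).sub (h4.const_mul 4))
  refine h.congr_deriv ?_
  simp only [Pi.pow_apply, esym_update, fsym_zero]
  push_cast
  ring

/-- `Ψ` equals `4(e₃ - e₂)(e₁ - 1) - 4(e₄ - e₃) - (e₁ - 1)²(e₂ - e₁)`, and its partial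
derivative with respect to `x₁` factors as
`∂Ψ/∂x₁ = -(f₁ + 3x₁ - 1)·(x₁(f₁ - 1) + f₁² - 2f₂ + 1)`. -/
theorem stmt11 (m : ℕ) (hm : 4 ≤ m) (x : Fin m → ℝ) :
    (∀ y : Fin m → ℝ,
      Psi m y = 4 * (esym m 3 y - esym m 2 y) * (esym m 1 y - 1)
        - 4 * (esym m 4 y - esym m 3 y) - (esym m 1 y - 1) ^ 2 * (esym m 2 y - esym m 1 y)) ∧
    deriv (fun t : ℝ => Psi m (Function.update x ⟨0, by omega⟩ t)) (x ⟨0, by omega⟩)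
      = -(fsym m 1 ⟨0, by omega⟩ x + 3 * x ⟨0, by omega⟩ - 1) *
          (x ⟨0, by omega⟩ * (fsym m 1 ⟨0, by omega⟩ x - 1)
            + fsym m 1 ⟨0, by omega⟩ x ^ 2 - 2 * fsym m 2 ⟨0, by omega⟩ x + 1) := by
  exact ⟨fun y => by unfold Psi; ring, (hasDerivAt_Psi_update m _ x).deriv⟩
end

section
/- Let W = x^d + a_{d−1}x^{d−1} + ⋯ + a_0 be a monic real polynomial having at least one vanishing coefficient. Then there exist s ∈ {+1, −1} and ε > 0 such that all coefficients of W(x + sε) are nonzero and every coefficient a_j ≠ 0 of W has the same sign as the coefficient of x^j in W(x + sε). Moreover, if a_k = 0 and a_{k+1} ≠ 0, then for each prescribed sign δ ∈ {+1, −1} one can choose s ∈ {+1, −1} and ε > 0 so that in addition the coefficient of x^k in W(x + sε) has sign δ. -/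
/-!
The coefficient of `x^j` in `W(x + t)` is `P_j(t)`, where `P_j = hasseDeriv j W` is the divided
`j`-th derivative of `W`. It satisfies `P_j(0) = a_j`, and `P_j ≠ 0` for `j ≤ d` because its
coefficient of `t^(d-j)` is `d.choose j`. Hence for all small `t ≠ 0` every `P_j(t)` with `j ≤ d`
is nonzero (finitely many roots) and has the sign of `a_j` whenever `a_j ≠ 0` (continuity); this
is `eventually_good`. If `a_k = 0 ≠ a_{k+1}`, then `P_k(t) = t Q(t)` with `Q(0) = (k+1) a_{k+1}`, so for
small `t` the sign of `P_k(t)` is that of `t a_{k+1}` (`eventually_coeff_sign`), and is therefore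
prescribed by the choice of the sign of `t`.
-/

open Polynomial
open Filter Topology

lemma coeff_shift (W : ℝ[X]) (t : ℝ) (j : ℕ) :
    (W.comp (X + C t)).coeff j = (hasseDeriv j W).eval t := by
  rw [← taylor_apply, taylor_coeff]

lemma eventually_eval_sign (p : ℝ[X]) (c : ℝ) (h : 0 < c * p.coeff 0) :
    ∀ᶠ t in 𝓝 (0 : ℝ), 0 < c * p.eval t := by
  have hc : ContinuousAt (fun t => c * p.eval t) 0 :=
    (continuous_const.mul p.continuous).continuousAt
  refine hc.eventually (lt_mem_nhds ?_)
  simpa only [← coeff_zero_eq_eval_zero] using h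

lemma eventually_eval_ne_zero {p : ℝ[X]} (hp : p ≠ 0) :
    ∀ᶠ t in 𝓝[≠] (0 : ℝ), p.eval t ≠ 0 := by
  have hfin : {t : ℝ | p.IsRoot t}.Finite := finite_setOfPred_isRoot hp
  have h := (hfin.subset (t := {t | p.IsRoot t} \ {0})
    Set.sdiff_subset).isClosed.isOpen_compl.mem_nhds (x := (0 : ℝ)) (by simp)
  filter_upwards [mem_nhdsWithin_of_mem_nhds h, self_mem_nhdsWithin] with t ht ht0 hr
  exact ht ⟨hr, ht0⟩

lemma hasseDeriv_ne_zero {W : ℝ[X]} (hW : W.Monic) {j : ℕ} (hj : j ≤ W.natDegree) :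
    hasseDeriv j W ≠ 0 := by
  intro h
  have h1 := congrArg (fun p => p.coeff (W.natDegree - j)) h
  simp only [hasseDeriv_coeff, Nat.sub_add_cancel hj, coeff_zero, hW.coeff_natDegree,
    mul_one] at h1
  exact (Nat.choose_pos hj).ne' (by exact_mod_cast h1)

/-- Every sufficiently small nonzero shift makes all coefficients nonzero and preserves the signs
of the nonzero ones. -/
lemma eventually_good {W : ℝ[X]} (hW : W.Monic) :
    ∀ᶠ t in 𝓝[≠] (0 : ℝ), (∀ j ≤ W.natDegree, (W.comp (X + C t)).coeff j ≠ 0) ∧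
      (∀ j, W.coeff j ≠ 0 → W.coeff j * (W.comp (X + C t)).coeff j > 0) := by
  have h1 : ∀ᶠ t in 𝓝[≠] (0 : ℝ), ∀ j ∈ Set.Iic W.natDegree, (hasseDeriv j W).eval t ≠ 0 :=
    (eventually_all_finite (Set.finite_Iic _)).2 fun j hj =>
      eventually_eval_ne_zero (hasseDeriv_ne_zero hW hj)
  have h2 : ∀ᶠ t in 𝓝[≠] (0 : ℝ), ∀ j ∈ W.support, 0 < W.coeff j * (hasseDeriv j W).eval t := by
    refine (eventually_all_finset _).2 fun j hj =>
      (eventually_eval_sign _ _ ?_).filter_mono nhdsWithin_le_nhds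
    simpa [hasseDeriv_coeff] using mem_support_iff.1 hj
  filter_upwards [h1, h2] with t ht1 ht2
  simp only [coeff_shift]
  exact ⟨ht1, fun j hj => ht2 j (mem_support_iff.2 hj)⟩

/-- A vanishing coefficient below a nonzero one acquires, under a small shift by `t`, the sign
of `t * W.coeff (k + 1)`. -/
lemma eventually_coeff_sign {W : ℝ[X]} {k : ℕ} (hk : W.coeff k = 0) (hk1 : W.coeff (k + 1) ≠ 0) :
    ∀ᶠ t in 𝓝[≠] (0 : ℝ), 0 < (t * W.coeff (k + 1)) * (W.comp (X + C t)).coeff k := by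
  have h : ∀ᶠ t in 𝓝 (0 : ℝ), 0 < W.coeff (k + 1) * (divX (hasseDeriv k W)).eval t := by
    apply eventually_eval_sign
    rw [coeff_divX, hasseDeriv_coeff, zero_add, add_comm 1 k, Nat.choose_succ_self_right]
    have : 0 < W.coeff (k + 1) * W.coeff (k + 1) := mul_self_pos.2 hk1
    push_cast
    nlinarith [(Nat.cast_nonneg k : (0 : ℝ) ≤ k)]
  filter_upwards [h.filter_mono nhdsWithin_le_nhds, self_mem_nhdsWithin] with t ht ht0
  have h0 : (hasseDeriv k W).eval t = (divX (hasseDeriv k W)).eval t * t := by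
    conv_lhs => rw [← divX_mul_X_add (hasseDeriv k W)]
    simp [hasseDeriv_coeff, hk]
  rw [coeff_shift, h0]
  have : 0 < t * t := mul_self_pos.2 ht0
  calc 0 < (t * t) * (W.coeff (k + 1) * (divX (hasseDeriv k W)).eval t) := mul_pos this ht
    _ = _ := by ring

lemma exists_pos_of_eventually {P : ℝ → Prop} (h : ∀ᶠ t in 𝓝[≠] (0 : ℝ), P t) {s : ℝ}
    (hs : s ≠ 0) : ∃ ε > (0 : ℝ), P (s * ε) := by
  have ht : Tendsto (fun ε : ℝ => s * ε) (𝓝[>] 0) (𝓝[≠] 0) := by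
    refine tendsto_nhdsWithin_iff.2 ⟨?_, ?_⟩
    · have : ContinuousAt (fun ε : ℝ => s * ε) 0 := by fun_prop
      simpa [ContinuousAt] using this.tendsto.mono_left (nhdsWithin_le_nhds (s := Set.Ioi 0))
    · filter_upwards [self_mem_nhdsWithin] with ε hε
      exact mul_ne_zero hs (ne_of_gt hε)
  obtain ⟨ε, h1, h2⟩ := ((ht.eventually h).and self_mem_nhdsWithin).exists
  exact ⟨ε, h2, h1⟩

/-- Simultaneous shift lemma: for a monic real polynomial `W` of degree `d` with at least one
vanishing coefficient, there is a shift `x ↦ x + sε`, `s = ±1`, `ε > 0`, after which all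
coefficients are nonzero and the initially nonzero coefficients keep their signs; moreover, if
`a_k = 0 ≠ a_{k+1}`, the sign of the new `k`-th coefficient can be prescribed. -/
theorem stmt12 (d : ℕ) (W : Polynomial ℝ) (hW : W.Monic) (hdeg : W.natDegree = d)
    (hvan : ∃ j < d, W.coeff j = 0) :
    (∃ s : ℝ, (s = 1 ∨ s = -1) ∧ ∃ ε > (0 : ℝ),
      (∀ j ≤ d, (W.comp (Polynomial.X + Polynomial.C (s * ε))).coeff j ≠ 0) ∧
      (∀ j, W.coeff j ≠ 0 →
        W.coeff j * (W.comp (Polynomial.X + Polynomial.C (s * ε))).coeff j > 0)) ∧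
    (∀ k, W.coeff k = 0 → W.coeff (k + 1) ≠ 0 → ∀ δ : ℝ, (δ = 1 ∨ δ = -1) →
      ∃ s : ℝ, (s = 1 ∨ s = -1) ∧ ∃ ε > (0 : ℝ),
        (∀ j ≤ d, (W.comp (Polynomial.X + Polynomial.C (s * ε))).coeff j ≠ 0) ∧
        (∀ j, W.coeff j ≠ 0 →
          W.coeff j * (W.comp (Polynomial.X + Polynomial.C (s * ε))).coeff j > 0) ∧
        δ * (W.comp (Polynomial.X + Polynomial.C (s * ε))).coeff k > 0) := by
  subst hdeg
  refine ⟨⟨1, Or.inl rfl, exists_pos_of_eventually (eventually_good hW) one_ne_zero⟩, ?_⟩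
  intro k hk hk1 δ hδ
  -- The sign `s` is chosen so that `s * a_{k+1}` has the sign `δ`.
  obtain ⟨s, hs, hsδ⟩ : ∃ s : ℝ, (s = 1 ∨ s = -1) ∧ 0 < δ * (s * W.coeff (k + 1)) := by
    have hne : δ * W.coeff (k + 1) ≠ 0 :=
      mul_ne_zero (by rcases hδ with rfl | rfl <;> norm_num) hk1
    rcases lt_or_gt_of_ne hne with h | h
    · exact ⟨-1, Or.inr rfl, by linarith⟩
    · exact ⟨1, Or.inl rfl, by linarith⟩
  have hs0 : s ≠ 0 := by rcases hs with rfl | rfl <;> norm_num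
  obtain ⟨ε, hε, ⟨h1, h2⟩, h3⟩ :=
    exists_pos_of_eventually ((eventually_good hW).and (eventually_coeff_sign hk hk1)) hs0
  refine ⟨s, hs, ε, hε, h1, h2, ?_⟩
  set c := (W.comp (X + C (s * ε))).coeff k
  have h4 : 0 < (s * W.coeff (k + 1)) * c := by
    refine pos_of_mul_pos_right (a := ε) ?_ hε.le
    calc 0 < s * ε * W.coeff (k + 1) * c := h3
      _ = _ := by ring
  set b := s * W.coeff (k + 1)
  have h5 : 0 < (b * b) * (δ * c) := by
    calc 0 < (δ * b) * (b * c) := mul_pos hsδ h4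
      _ = _ := by ring
  exact pos_of_mul_pos_right h5 (mul_self_nonneg b)
end

section
/- The couple (Σ_{1,7,2}, (0,3)) of degree 9 is realizable: there exists a real polynomial of degree 9 with coefficient sign sequence (+,−,−,−,−,−,−,−,+,+) having no positive real roots, exactly 3 simple negative real roots, and three pairs of nonreal conjugate roots. -/
/-!
The witness is `Q = (X + 1)(X + 2)(X + 3) S`, where `S` is an explicit sextic without real roots.
On the negative axis `x⁹ - b₃x³ + b₁x + b₀` can change sign three times while it stays positive for
`x > 0`; imposing the roots `-1, -2, -3` fixes `b₃, b₁, b₀`, and a small perturbation makes the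
remaining coefficients (of `x⁸, x⁷, x⁶, x⁵, x⁴, x²`) negative. Dividing the result by the cubic gives
`S`, whose positivity follows from a sum-of-squares decomposition (`sextic_pos`). The real roots of
`Q` are therefore exactly `-1, -2, -3`, all simple, and the signs are read off the expanded form.
-/

open Polynomial

/-- The sextic cofactor of the witness. -/
noncomputable def sextic : ℝ[X] :=
  10 * X ^ 6 - 61 * X ^ 5 + 255 * X ^ 4 - 920 * X ^ 3 + 3080 * X ^ 2 - 9900 * X + 15060

/-- The witness, in expanded form. -/
noncomputable def witness : ℝ[X] :=
  C 10 * X ^ 9 + C (-1) * X ^ 8 + C (-1) * X ^ 7 + C (-1) * X ^ 6 + C (-1) * X ^ 5 + C (-10) * X ^ 4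
    + C (-15980) * X ^ 3 + C (-60) * X ^ 2 + C 106260 * X + C 90360

lemma sextic_pos (x : ℝ) : 0 < sextic.eval x := by
  -- Squares are completed first in `x ^ 6, x ^ 5`, then `x ^ 4, x ^ 3`, then in the quadratic rest;
  -- the 5 is chosen so that this quadratic has negative discriminant.
  have h : sextic.eval x = 10 * (x ^ 2 * (x - 61 / 20)) ^ 2 + 79 / 40 * (x ^ 2) ^ 2
      + 10 * (4 * x ^ 2 - 23 / 2 * x + 5) ^ 2
      + 2715 / 2 * (x - 1750 / 543) ^ 2 + (14810 - 2715 / 2 * (1750 / 543) ^ 2) := by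
    simp only [sextic, eval_add, eval_sub, eval_mul, eval_pow, eval_X, eval_ofNat]
    ring
  rw [h]
  have : (0 : ℝ) < 14810 - 2715 / 2 * (1750 / 543) ^ 2 := by norm_num
  positivity

lemma witness_eq : witness = (X - C (-1)) * (X - C (-2)) * (X - C (-3)) * sextic := by
  simp only [witness, sextic, map_neg, map_ofNat, map_one]
  ring

lemma witness_natDegree : witness.natDegree = 9 := by
  unfold witness
  compute_degree!

lemma witness_roots : witness.roots = {-1, -2, -3} := by
  have hS : sextic ≠ 0 := fun h => by simpa [h] using sextic_pos 0
  have hr : sextic.roots = 0 :=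
    Multiset.eq_zero_of_forall_notMem fun x hx =>
      (sextic_pos x).ne' ((mem_roots hS).1 hx)
  have h1 := X_sub_C_ne_zero (-1 : ℝ)
  have h2 := X_sub_C_ne_zero (-2 : ℝ)
  have h3 := X_sub_C_ne_zero (-3 : ℝ)
  rw [witness_eq, roots_mul (by positivity), roots_mul (by positivity), roots_mul (by positivity),
    hr, roots_X_sub_C, roots_X_sub_C, roots_X_sub_C]
  rfl

theorem stmt17 : Realizable (sigmaPat [1, 7, 2]) 0 3 := by
  refine ⟨witness, ⟨?_, ?_⟩, ?_, ?_, ?_⟩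
  · rw [witness_natDegree]
    simp [sigmaPat, altBlocks]
  · rw [witness_natDegree]
    intro i
    have hi : (i : ℕ) < 10 := by simpa [sigmaPat, altBlocks] using i.2
    obtain ⟨i, h⟩ := i
    simp only at hi
    interval_cases i <;>
      simp [sigmaPat, altBlocks, witness, coeff_X, coeff_C, -map_neg]
  · rw [witness_roots, Multiset.countP_eq_zero]
    intro x hx
    simp only [Multiset.insert_eq_cons, Multiset.mem_cons, Multiset.mem_singleton] at hx
    rcases hx with rfl | rfl | rfl <;> norm_num
  · rw [witness_roots, show (3 : ℕ) = Multiset.card ({-1, -2, -3} : Multiset ℝ) by rfl,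
      Multiset.countP_eq_card]
    intro x hx
    simp only [Multiset.insert_eq_cons, Multiset.mem_cons, Multiset.mem_singleton] at hx
    rcases hx with rfl | rfl | rfl <;> norm_num
  · rw [witness_roots]
    norm_num [Multiset.insert_eq_cons]
end

section
/- For each ν ∈ {3, 5, 7, 9}, the couple (Σ_{1,4,4,4,1}, (2, ν)) of degree 13 is realizable: there exists a real polynomial of degree 13 with coefficient sign sequence (+,−,−,−,−,+,+,+,+,−,−,−,−,+) having exactly 2 positive real roots and exactly ν negative real roots, all simple, its remaining 11 − ν roots being nonreal. -/
/-!
The polynomial `(x + 1)^9 (x - 1)^2 = (x + 1)^7 (x^2 - 1)^2` has sign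
pattern `Σ_{4,4,4}`, with no zero coefficient. Multiplying it by `(x - M)(x - 1/M)` with `M` large
adds one sign at either end and gives exactly the pattern `Σ_{1,4,4,4,1}`. All the sign conditions
are open, so they survive a small perturbation which turns the double root `1` into a nonreal pair
and splits the ninefold root `-1` into `ν` distinct negative roots and `(9 - ν)/2` nonreal pairs.

After rescaling `x` by `20`, with `M = 20`, the witnesses are
`(x - 1)(x - 400)((x - 20)^2 + 1)((x + 20)^2 + 1)^k ∏ (x + a)` with `k = (9 - ν)/2` and `a` running
over the `ν` consecutive integers centred at `20`. The real roots are read off from this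
factorization (`roots_mul_of_pos`) and the signs from the expanded form
(`hasSignPattern_of_coeffs`).
-/

open Polynomial

/-- A factor without real zeros does not contribute to the real roots. -/
lemma roots_mul_of_pos (s : Multiset ℝ) (R : ℝ[X]) (hR : ∀ x, 0 < R.eval x) :
    ((s.map fun a => X - C a).prod * R).roots = s := by
  have hR0 : R ≠ 0 := by
    rintro rfl
    simpa using hR 0
  have hs : (s.map fun a => X - C a).prod ≠ 0 :=
    (monic_multiset_prod_of_monic _ _ fun a _ => monic_X_sub_C a).ne_zero
  have hRr : R.roots = 0 := by
    refine Multiset.eq_zero_of_forall_notMem fun x hx => ?_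
    exact (hR x).ne' ((mem_roots hR0).1 hx)
  rw [roots_mul (mul_ne_zero hs hR0), roots_multiset_prod_X_sub_C, hRr, add_zero]

/-- The pattern `Σ_{1,4,4,4,1}` read off from the expanded form of a monic polynomial of
degree 13. -/
lemma hasSignPattern_of_coeffs (c₁₂ c₁₁ c₁₀ c₉ c₈ c₇ c₆ c₅ c₄ c₃ c₂ c₁ c₀ : ℝ)
    (h₁ : c₁₂ < 0 ∧ c₁₁ < 0 ∧ c₁₀ < 0 ∧ c₉ < 0)
    (h₂ : 0 < c₈ ∧ 0 < c₇ ∧ 0 < c₆ ∧ 0 < c₅)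
    (h₃ : c₄ < 0 ∧ c₃ < 0 ∧ c₂ < 0 ∧ c₁ < 0 ∧ 0 < c₀) :
    HasSignPattern (X ^ 13 + C c₁₂ * X ^ 12 + C c₁₁ * X ^ 11 + C c₁₀ * X ^ 10 + C c₉ * X ^ 9
      + C c₈ * X ^ 8 + C c₇ * X ^ 7 + C c₆ * X ^ 6 + C c₅ * X ^ 5 + C c₄ * X ^ 4 + C c₃ * X ^ 3
      + C c₂ * X ^ 2 + C c₁ * X + C c₀) (sigmaPat [1, 4, 4, 4, 1]) := by
  obtain ⟨a₁, a₂, a₃, a₄⟩ := h₁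
  obtain ⟨b₁, b₂, b₃, b₄⟩ := h₂
  obtain ⟨d₁, d₂, d₃, d₄, d₅⟩ := h₃
  have hpat : sigmaPat [1, 4, 4, 4, 1]
      = [1, -1, -1, -1, -1, 1, 1, 1, 1, -1, -1, -1, -1, 1] := by
    simp [sigmaPat, altBlocks, List.replicate]
  rw [hpat]
  set Q : ℝ[X] := X ^ 13 + C c₁₂ * X ^ 12 + C c₁₁ * X ^ 11 + C c₁₀ * X ^ 10 + C c₉ * X ^ 9
      + C c₈ * X ^ 8 + C c₇ * X ^ 7 + C c₆ * X ^ 6 + C c₅ * X ^ 5 + C c₄ * X ^ 4 + C c₃ * X ^ 3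
      + C c₂ * X ^ 2 + C c₁ * X + C c₀ with hQ
  have hdeg : Q.natDegree = 13 := by
    rw [hQ]
    compute_degree!
  refine ⟨by rw [hdeg]; rfl, ?_⟩
  rw [hdeg]
  intro i
  fin_cases i <;> simp [hQ, coeff_X, coeff_C, coeff_X_pow] <;> assumption

/-- A polynomial given both in factored form, with real roots `s` and `k + 1` nonreal pairs, and
in expanded form with the signs of `Σ_{1,4,4,4,1}`, realizes the pattern. -/
lemma realizable_of_eq {ν : ℕ} (k : ℕ) (s : Multiset ℝ)
    (c₁₂ c₁₁ c₁₀ c₉ c₈ c₇ c₆ c₅ c₄ c₃ c₂ c₁ c₀ : ℝ)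
    (h : (s.map fun a => X - C a).prod * (((X - 20) ^ 2 + 1) * ((X + 20) ^ 2 + 1) ^ k)
      = X ^ 13 + C c₁₂ * X ^ 12 + C c₁₁ * X ^ 11 + C c₁₀ * X ^ 10 + C c₉ * X ^ 9
      + C c₈ * X ^ 8 + C c₇ * X ^ 7 + C c₆ * X ^ 6 + C c₅ * X ^ 5 + C c₄ * X ^ 4 + C c₃ * X ^ 3
      + C c₂ * X ^ 2 + C c₁ * X + C c₀)
    (hs : s.countP (fun x => 0 < x) = 2 ∧ s.countP (fun x => x < 0) = ν ∧ s.Nodup)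
    (h₁ : c₁₂ < 0 ∧ c₁₁ < 0 ∧ c₁₀ < 0 ∧ c₉ < 0)
    (h₂ : 0 < c₈ ∧ 0 < c₇ ∧ 0 < c₆ ∧ 0 < c₅)
    (h₃ : c₄ < 0 ∧ c₃ < 0 ∧ c₂ < 0 ∧ c₁ < 0 ∧ 0 < c₀) :
    Realizable (sigmaPat [1, 4, 4, 4, 1]) 2 ν := by
  refine ⟨_, hasSignPattern_of_coeffs _ _ _ _ _ _ _ _ _ _ _ _ _ h₁ h₂ h₃, ?_⟩
  rw [← h, RootData, roots_mul_of_pos]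
  · exact hs
  · intro x
    simp only [eval_mul, eval_add, eval_pow, eval_sub, eval_X, eval_ofNat, eval_one]
    positivity

lemma realizable_3 : Realizable (sigmaPat [1, 4, 4, 4, 1]) 2 3 := by
  refine realizable_of_eq 3 {1, 400, -19, -20, -21}
    (-261) (-48137) (-2824423) (-65418378) 310242678 50576833318 1010736655962 2427767776837
    (-210889509424497) (-3638310290875101) (-24814869240541619) (-53874841712768380)
    82535421430392000
    ?_ (by simp [← Multiset.cons_zero]; norm_num) (by norm_num) (by norm_num) (by norm_num)
  simp only [Multiset.insert_eq_cons, Multiset.map_cons, Multiset.map_singleton,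
    Multiset.prod_cons, Multiset.prod_singleton, map_neg, map_ofNat, map_one]
  ring

lemma realizable_5 : Realizable (sigmaPat [1, 4, 4, 4, 1]) 2 5 := by
  refine realizable_of_eq 2 {1, 400, -18, -19, -20, -21, -22}
    (-261) (-48142) (-2822918) (-65235888) 316461688 50581986318 1006485499562 2342863513247
    (-210842308444307) (-3618290559267296) (-24580138550787524) (-53100430223286480)
    81506301462432000
    ?_ (by simp [← Multiset.cons_zero]; norm_num) (by norm_num) (by norm_num) (by norm_num)
  simp only [Multiset.insert_eq_cons, Multiset.map_cons, Multiset.map_singleton,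
    Multiset.prod_cons, Multiset.prod_singleton, map_neg, map_ofNat, map_one]
  ring

lemma realizable_7 : Realizable (sigmaPat [1, 4, 4, 4, 1]) 2 7 := by
  refine realizable_of_eq 1 {1, 400, -17, -18, -19, -20, -21, -22, -23}
    (-261) (-48152) (-2819908) (-64870858) 328882658 50591129368 997974351712 2173823201017
    (-210732580662877) (-3578323140452736) (-24114413059280284) (-51573479235541680)
    79473725366112000
    ?_ (by simp [← Multiset.cons_zero]; norm_num) (by norm_num) (by norm_num) (by norm_num)
  simp only [Multiset.insert_eq_cons, Multiset.map_cons, Multiset.map_singleton,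
    Multiset.prod_cons, Multiset.prod_singleton, map_neg, map_ofNat, map_one]
  ring

lemma realizable_9 : Realizable (sigmaPat [1, 4, 4, 4, 1]) 2 9 := by
  refine realizable_of_eq 0 {1, 400, -16, -17, -18, -19, -20, -21, -22, -23, -24}
    (-261) (-48169) (-2814791) (-64250137) 349940337 50602717673 983475685047 1889073758056
    (-210494201590876) (-3510628771122704) (-23335323969085056) (-49050991556997120)
    76104515063808000
    ?_ (by simp [← Multiset.cons_zero]; norm_num) (by norm_num) (by norm_num) (by norm_num)
  simp only [Multiset.insert_eq_cons, Multiset.map_cons, Multiset.map_singleton,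
    Multiset.prod_cons, Multiset.prod_singleton, map_neg, map_ofNat, map_one]
  ring

theorem stmt18 : ∀ ν ∈ ({3, 5, 7, 9} : Set ℕ), Realizable (sigmaPat [1, 4, 4, 4, 1]) 2 ν := by
  rintro ν (rfl | rfl | rfl | rfl)
  · exact realizable_3
  · exact realizable_5
  · exact realizable_7
  · exact realizable_9
end

section
/- For each ρ ∈ {2, 4, 6, 8}, the couple (Σ_{1,4,5,4,1}, (2, ρ)) of degree 14 is realizable: there exists a real polynomial of degree 14 with coefficient sign sequence (+,−,−,−,−,+,+,+,+,+,−,−,−,−,+) having exactly 2 positive real roots and exactly ρ negative real roots, all simple, its remaining 12 − ρ roots being nonreal. -/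
/-!
The four couples are realized by explicit polynomials with integer coefficients. Each one is a
product of distinct linear factors, which carry the two positive and the `ρ` negative roots, and
of monic quadratic factors `X² + bX + c` with `b² < 4c`, which carry the nonreal roots.

`realizable_of_factorization` reduces realizability to finite checks: the roots of such a product
are exactly the prescribed ones, and the signs are read off the expanded form
`∑ cᵢ X^(14 - i)`, which `ring` compares with the factorization.
-/

open Polynomial

/-- The monic quadratic `X² + bX + c`, with `q = (b, c)`. -/
noncomputable def quad (q : ℝ × ℝ) : ℝ[X] := X ^ 2 + C q.1 * X + C q.2

lemma eval_quad_pos {q : ℝ × ℝ} (hq : q.1 ^ 2 < 4 * q.2) (x : ℝ) : 0 < (quad q).eval x := by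
  simp only [quad, eval_add, eval_mul, eval_pow, eval_X, eval_C]
  nlinarith [sq_nonneg (2 * x + q.1)]

lemma eval_prod_quad_pos {D : List (ℝ × ℝ)} (hD : ∀ q ∈ D, q.1 ^ 2 < 4 * q.2) (x : ℝ) :
    0 < ((D.map quad).prod).eval x := by
  induction D with
  | nil => simp
  | cons q D ih =>
    simp only [List.forall_mem_cons] at hD
    simpa using mul_pos (eval_quad_pos hD.1 x) (ih hD.2)

/-- Linear factors at `A`, times quadratics without real roots, have root multiset `A`. -/
lemma roots_prod_linear_mul_quad (A : List ℝ) {D : List (ℝ × ℝ)}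
    (hD : ∀ q ∈ D, q.1 ^ 2 < 4 * q.2) :
    ((A.map fun a => X - C a).prod * (D.map quad).prod).roots = (A : Multiset ℝ) := by
  have hR : (D.map quad).prod.roots = 0 := by
    refine Multiset.eq_zero_of_forall_notMem fun x hx => ?_
    exact (eval_prod_quad_pos hD x).ne' (isRoot_of_mem_roots hx)
  have hR0 : (D.map quad).prod ≠ 0 := fun h => by
    simpa [h] using eval_prod_quad_pos hD 0
  have hL : (A.map fun a => X - C a).prod = ((A : Multiset ℝ).map fun a => X - C a).prod := by
    simp
  rw [hL, roots_mul (mul_ne_zero (monic_multiset_prod_of_monic _ _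
    fun a _ => monic_X_sub_C a).ne_zero hR0), roots_multiset_prod_X_sub_C, hR, add_zero]

/-- Sign pattern from the expanded form: `c` lists the coefficients from the leading one down. -/
lemma hasSignPattern_of_eq_sum {Q : ℝ[X]} {c : ℕ → ℝ}
    (hQ : Q = ∑ i ∈ Finset.range 15, C (c i) * X ^ (14 - i))
    (h0 : 0 < c 0 ∧ c 1 < 0 ∧ c 2 < 0 ∧ c 3 < 0 ∧ c 4 < 0)
    (h5 : 0 < c 5 ∧ 0 < c 6 ∧ 0 < c 7 ∧ 0 < c 8 ∧ 0 < c 9)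
    (h10 : c 10 < 0 ∧ c 11 < 0 ∧ c 12 < 0 ∧ c 13 < 0 ∧ 0 < c 14) :
    HasSignPattern Q (sigmaPat [1, 4, 5, 4, 1]) := by
  have hcoeff : ∀ i < 15, Q.coeff (14 - i) = c i := by
    intro i hi
    rw [hQ, finsetSum_coeff, Finset.sum_eq_single i]
    · simp
    · intro j hj hji
      rw [coeff_C_mul_X_pow, if_neg]
      have := Finset.mem_range.1 hj
      omega
    · intro h
      exact absurd (Finset.mem_range.2 hi) h
  have hdeg : Q.natDegree = 14 := by
    refine le_antisymm ?_ (le_natDegree_of_ne_zero ?_)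
    · rw [hQ]
      refine natDegree_sum_le_of_forall_le _ _ fun i _ => ?_
      exact (natDegree_C_mul_X_pow_le _ _).trans (Nat.sub_le _ _)
    · have := hcoeff 0 (by norm_num)
      rw [Nat.sub_zero] at this
      exact this ▸ h0.1.ne'
  have hσ : sigmaPat [1, 4, 5, 4, 1] = [1, -1, -1, -1, -1, 1, 1, 1, 1, 1, -1, -1, -1, -1, 1] := by
    simp [sigmaPat, altBlocks, List.replicate]
  rw [hσ]
  refine ⟨by simp [hdeg], fun i => ?_⟩
  rw [hdeg, hcoeff i i.isLt]
  obtain ⟨i, hi⟩ := i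
  simp only [List.length_cons, List.length_nil] at hi
  interval_cases i <;> simp [h0, h5, h10]

/-- Realizability from a factorization with positive roots `P`, negative roots `N` and quadratic
factors `D`, together with its expansion `c` (coefficients from the leading one down). -/
lemma realizable_of_factorization (P N : List ℝ) (D : List (ℝ × ℝ)) (c : ℕ → ℝ)
    (hP : ∀ x ∈ P, 0 < x) (hN : ∀ x ∈ N, x < 0) (hPd : P.Nodup) (hNd : N.Nodup)
    (hD : ∀ q ∈ D, q.1 ^ 2 < 4 * q.2)
    (hQ : ((P ++ N).map fun a => X - C a).prod * (D.map quad).prod =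
      ∑ i ∈ Finset.range 15, C (c i) * X ^ (14 - i))
    (h0 : 0 < c 0 ∧ c 1 < 0 ∧ c 2 < 0 ∧ c 3 < 0 ∧ c 4 < 0)
    (h5 : 0 < c 5 ∧ 0 < c 6 ∧ 0 < c 7 ∧ 0 < c 8 ∧ 0 < c 9)
    (h10 : c 10 < 0 ∧ c 11 < 0 ∧ c 12 < 0 ∧ c 13 < 0 ∧ 0 < c 14) :
    Realizable (sigmaPat [1, 4, 5, 4, 1]) P.length N.length := by
  refine ⟨_, hasSignPattern_of_eq_sum hQ h0 h5 h10, ?_⟩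
  unfold RootData
  rw [roots_prod_linear_mul_quad _ hD, ← Multiset.coe_add, Multiset.countP_add,
    Multiset.countP_add]
  refine ⟨?_, ?_, ?_⟩
  · rw [Multiset.countP_eq_card.2 (by simpa using hP),
      Multiset.countP_eq_zero.2 (by simpa using fun x hx => (hN x hx).le)]
    simp
  · rw [Multiset.countP_eq_zero.2 (by simpa using fun x hx => (hP x hx).le),
      Multiset.countP_eq_card.2 (by simpa using hN)]
    simp
  · rw [Multiset.coe_add, Multiset.coe_nodup]
    exact hPd.append hNd fun x hx hx' => (hP x hx).not_gt (hN x hx')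

lemma realizable_two_two : Realizable (sigmaPat [1, 4, 5, 4, 1]) 2 2 := by
  refine realizable_of_factorization [1, 2] [-2, -5]
    [(1, 3), (3, 34), (-1, 10), (4, 7), (-12, 38)]
    (fun i => List.getD
      [1, -1, -10, -161, -688, 4231, 14604, 65673, 167443, 234602, -666806, -1915480,
        -2120848, -1208960, 5426400] i 0)
    ?_ ?_ ?_ ?_ ?_ ?_ ?_ ?_ ?_
  all_goals try norm_num
  simp only [quad, Finset.sum_range_succ, Finset.sum_range_zero, List.getElem?_cons_zero,
    List.getElem?_cons_succ, Option.getD_some, map_neg, map_ofNat, map_one]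
  ring

lemma realizable_two_four : Realizable (sigmaPat [1, 4, 5, 4, 1]) 2 4 := by
  refine realizable_of_factorization [2, 3] [-3, -5, -6, -7]
    [(-2, 31), (4, 76), (-22, 122), (2, 11)]
    (fun i => List.getD
      [1, -2, -78, -724, -5394, 46296, 522276, 2487988, 17435425, 40910394, -114066518,
        -597446224, -2054881392, -10402848, 11951422560] i 0)
    ?_ ?_ ?_ ?_ ?_ ?_ ?_ ?_ ?_
  all_goals try norm_num
  simp only [quad, Finset.sum_range_succ, Finset.sum_range_zero, List.getElem?_cons_zero,
    List.getElem?_cons_succ, Option.getD_some, map_neg, map_ofNat, map_one]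
  ring

lemma realizable_two_six : Realizable (sigmaPat [1, 4, 5, 4, 1]) 2 6 := by
  refine realizable_of_factorization [2, 4] [-5, -6, -8, -9, -10, -11]
    [(-1, 230), (0, 22), (-43, 466)]
    (fun i => List.getD
      [1, -1, -430, -4524, -40075, 505987, 32099892, 420833050, 2105210596, 2879775600,
        -12249666464, -144670220512, -735828829120, -237258067200, 4482010368000] i 0)
    ?_ ?_ ?_ ?_ ?_ ?_ ?_ ?_ ?_
  all_goals try norm_num
  simp only [quad, Finset.sum_range_succ, Finset.sum_range_zero, List.getElem?_cons_zero,
    List.getElem?_cons_succ, Option.getD_some, map_neg, map_ofNat, map_one, map_zero]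
  ring

lemma realizable_two_eight : Realizable (sigmaPat [1, 4, 5, 4, 1]) 2 8 := by
  refine realizable_of_factorization [1, 6] [-4, -5, -6, -7, -9, -12, -13, -16]
    [(-61, 967), (-5, 470)]
    (fun i => List.getD
      [1, -1, -842, -10429, -95718, 2431475, 257060530, 5923179885, 55110451537,
        126606862566, -1505021328148, -12120045703176, -30455641114560, -7563895067520,
        51456703334400] i 0)
    ?_ ?_ ?_ ?_ ?_ ?_ ?_ ?_ ?_
  all_goals try norm_num
  simp only [quad, Finset.sum_range_succ, Finset.sum_range_zero, List.getElem?_cons_zero,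
    List.getElem?_cons_succ, Option.getD_some, map_neg, map_ofNat, map_one]
  ring

theorem stmt19 : ∀ ρ ∈ ({2, 4, 6, 8} : Set ℕ), Realizable (sigmaPat [1, 4, 5, 4, 1]) 2 ρ := by
  rintro ρ (rfl | rfl | rfl | rfl)
  exacts [realizable_two_two, realizable_two_four, realizable_two_six, realizable_two_eight]
end
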